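/- arXiv:1903.09974 — 4 statements merged into one kernel-verified Lean document; each statement's English description precedes it below -/
import Mathlib

section
/- For every f ∈ 𝒮 with logarithmic coefficients γ_n, the Duren–Leung inequality ∑_{n=1}^∞ |γ_n|² ≤ π²/6 holds, with equality if and only if f(z) = z/(1−e^{iθ}z)² for some θ ∈ ℝ. -/
/-!
Write the complement of the origin in logarithmic coordinates `w = exp ζ`. For `f` in the class `𝒮`
let `green f ζ` be Green's function, with pole `0`, of the domain `f(𝔻)` at `exp ζ`, extended by zero
outside the domain, and let `greenMean f x` be its integral over the circle of radius `exp x`.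

**Reduction to circular means.** Put `excess f x = greenMean f x - 2π max(-x, 0)`. Jensen's formula
and Fubini's theorem express the circular means of the truncated Green's function through
`log |f|` on circles `|z| = ρ`; the layer-cake formula turns the integral of the excess into the
integral of `(log |f(z)/z|)²`, which Parseval's identity evaluates. This gives
`∑ |γ_n|² = (2π)⁻¹ ∫ excess f` (`hasSum_excess`), first for the dilates `f(ρz)/ρ` and then, by
dominated convergence, for `f`. The inequality thus follows from `greenMean f ≤ greenMean koebe`
(`greenMean_le`), since the coefficients of the Koebe function are `1/n` and `∑ 1/n² = π²/6`.

**Comparison of circular means.** This is a variant of Baernstein's argument. Let `Q f φ z` be the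
integral of `green f (· + iφ) - green koebe` over the vertical segment with abscissa `re z` and
ordinates between `-im z` and `im z`. On the strip `0 < im z < π` it is subharmonic in `z`, because
`green f` is subharmonic and `green koebe` is harmonic off the slit. It vanishes on the lower edge,
is small far to the left and not much above zero far to the right. On the upper edge it equals
`greenMean f - greenMean koebe` for every `φ`, and two cases arise. Either the whole circle lies in
`f(𝔻)`; then so does the disk it bounds, and `greenMean f x = -2πx ≤ greenMean koebe x`. Or the circle
contains an omitted point `w`; for the translation `φ` which moves `w` to both ends of the segment, the
integrand is nonpositive there, so that `Q f φ` has no positive slope towards the edge.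
A maximum over all `z` and all `φ`, after a small linear perturbation, is then impossible unless it
is at most zero (`Q_le_of_boundary`, `Q_nonpos`). Letting `φ` vary plays the role of the circular
rearrangement.

**Equality.** If the sums agree, the continuous functions `greenMean f ≤ greenMean koebe` coincide.
A Hopf-type barrier gives a zero of some `Q f φ` inside the strip (`exists_Q_eq_zero`), and the
strong maximum principle gives `Q f φ = 0` throughout. Hence `green f` vanishes on a ray from
distance `1/4` on, `f` is subordinate to a rotated Koebe function, and Schwarz's lemma gives equality.
-/

open Complex Metric Real

/-- The class `𝒮` of normalized univalent (analytic and injective) functions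
on the unit disk. -/
def InClassS (f : ℂ → ℂ) : Prop :=
  AnalyticOnNhd ℂ f (ball (0 : ℂ) 1) ∧ Set.InjOn f (ball (0 : ℂ) 1) ∧
    f 0 = 0 ∧ deriv f 0 = 1

/-- `γ` are the logarithmic coefficients of `f`: there is an analytic branch `g`
of `log (f z / z)` on the unit disk with `g 0 = 0` whose Taylor coefficients at `0`
are `2 * γ n` for `n ≥ 1`. -/
def IsLogCoeffs (f : ℂ → ℂ) (γ : ℕ → ℂ) : Prop :=
  ∃ g : ℂ → ℂ, AnalyticOnNhd ℂ g (ball (0 : ℂ) 1) ∧ g 0 = 0 ∧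
    (∀ z ∈ ball (0 : ℂ) 1, z ≠ 0 → Complex.exp (g z) = f z / z) ∧
    ∀ n : ℕ, 1 ≤ n → iteratedDeriv n g 0 = (n.factorial : ℂ) * (2 * γ n)

/-- `f` coincides on the unit disk with a rotation `z / (1 - e^{iθ} z)^2`
of the Koebe function. -/
def IsKoebeRotation (f : ℂ → ℂ) : Prop :=
  ∃ θ : ℝ, Set.EqOn f
    (fun z => z / (1 - Complex.exp (θ * Complex.I) * z) ^ 2) (ball (0 : ℂ) 1)

namespace DurenLeung

open Set Filter Topology MeasureTheory

/-! ### Green's function of the image domain -/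

open Classical in
/-- Green's function of `f(𝔻)` with pole at `0`, in the logarithmic coordinate `ζ` with `w = exp ζ`,
extended by `0` outside `f(𝔻)`:
its value is `-log |z|` if `exp ζ = f z` with `|z| < 1`, and `0` if `exp ζ` is omitted by `f`. -/
noncomputable def green (f : ℂ → ℂ) (ζ : ℂ) : ℝ :=
  if h : ∃ z ∈ ball (0 : ℂ) 1, f z = Complex.exp ζ then -Real.log ‖h.choose‖ else 0

lemma green_eq {f : ℂ → ℂ} (hf : InClassS f) {z ζ : ℂ} (hz : z ∈ ball (0 : ℂ) 1)
    (h : f z = Complex.exp ζ) : green f ζ = -Real.log ‖z‖ := by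
  have hex : ∃ z ∈ ball (0 : ℂ) 1, f z = Complex.exp ζ := ⟨z, hz, h⟩
  rw [green, dif_pos hex, hf.2.1 hex.choose_spec.1 hz (hex.choose_spec.2.trans h.symm)]

lemma green_eq_zero {f : ℂ → ℂ} {ζ : ℂ} (h : ∀ z ∈ ball (0 : ℂ) 1, f z ≠ Complex.exp ζ) :
    green f ζ = 0 := by
  rw [green, dif_neg]
  push Not
  exact h

lemma green_congr (f : ℂ → ℂ) {ζ ξ : ℂ} (h : Complex.exp ζ = Complex.exp ξ) :
    green f ζ = green f ξ := by
  unfold green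
  rw [h]

lemma ne_zero_of_eq_exp {f : ℂ → ℂ} (hf : InClassS f) {z ζ : ℂ} (h : f z = Complex.exp ζ) :
    z ≠ 0 := by
  rintro rfl
  exact Complex.exp_ne_zero ζ (h ▸ hf.2.2.1)

lemma lt_green_iff {f : ℂ → ℂ} (hf : InClassS f) {t : ℝ} (ht : 0 ≤ t) (ζ : ℂ) :
    t < green f ζ ↔ ∃ z, ‖z‖ < Real.exp (-t) ∧ f z = Complex.exp ζ := by
  have h1 : Real.exp (-t) ≤ 1 := by simpa using ht
  constructor
  · intro h
    by_cases hex : ∃ z ∈ ball (0 : ℂ) 1, f z = Complex.exp ζ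
    · obtain ⟨z, hz, hfz⟩ := hex
      refine ⟨z, ?_, hfz⟩
      rw [green_eq hf hz hfz] at h
      have hz0 := norm_pos_iff.2 (ne_zero_of_eq_exp hf hfz)
      exact (Real.log_lt_iff_lt_exp hz0).1 (by linarith)
    · push Not at hex
      rw [green_eq_zero hex] at h
      linarith
  · rintro ⟨z, hz, hfz⟩
    have hz1 : z ∈ ball (0 : ℂ) 1 := by simpa using hz.trans_le h1
    rw [green_eq hf hz1 hfz]
    have hz0 := norm_pos_iff.2 (ne_zero_of_eq_exp hf hfz)
    have := (Real.log_lt_iff_lt_exp hz0).2 hz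
    linarith

lemma le_green_iff {f : ℂ → ℂ} (hf : InClassS f) {t : ℝ} (ht : 0 < t) (ζ : ℂ) :
    t ≤ green f ζ ↔ ∃ z, ‖z‖ ≤ Real.exp (-t) ∧ f z = Complex.exp ζ := by
  have h1 : Real.exp (-t) < 1 := by simpa using ht
  constructor
  · intro h
    by_cases hex : ∃ z ∈ ball (0 : ℂ) 1, f z = Complex.exp ζ
    · obtain ⟨z, hz, hfz⟩ := hex
      refine ⟨z, ?_, hfz⟩
      rw [green_eq hf hz hfz] at h
      have hz0 := norm_pos_iff.2 (ne_zero_of_eq_exp hf hfz)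
      exact (Real.log_le_iff_le_exp hz0).1 (by linarith)
    · push Not at hex
      rw [green_eq_zero hex] at h
      linarith
  · rintro ⟨z, hz, hfz⟩
    have hz1 : z ∈ ball (0 : ℂ) 1 := by simpa using hz.trans_lt h1
    rw [green_eq hf hz1 hfz]
    have hz0 := norm_pos_iff.2 (ne_zero_of_eq_exp hf hfz)
    have := (Real.log_le_iff_le_exp hz0).2 hz
    linarith

lemma green_nonneg (f : ℂ → ℂ) (hf : InClassS f) (ζ : ℂ) : 0 ≤ green f ζ := by
  by_cases hex : ∃ z ∈ ball (0 : ℂ) 1, f z = Complex.exp ζ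
  · obtain ⟨z, hz, hfz⟩ := hex
    rw [green_eq hf hz hfz]
    have := Real.log_nonpos (norm_nonneg z) (mem_ball_zero_iff.1 hz).le
    linarith
  · push Not at hex
    exact (green_eq_zero hex).ge

lemma isOpen_image {f : ℂ → ℂ} (hf : InClassS f) {s : Set ℂ} (hs : s ⊆ ball (0 : ℂ) 1)
    (hso : IsOpen s) : IsOpen (f '' s) := by
  rcases hf.1.is_constant_or_isOpen (convex_ball (0 : ℂ) 1).isPreconnected with ⟨w, hw⟩ | h
  · exfalso
    have h1 : (1 / 2 : ℂ) ∈ ball (0 : ℂ) 1 := by simp; norm_num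
    have h0 : (0 : ℂ) ∈ ball (0 : ℂ) 1 := by simp
    have := hf.2.1 h1 h0 ((hw _ h1).trans (hw _ h0).symm)
    norm_num at this
  · exact h s hs hso

lemma continuousOn_of_class {f : ℂ → ℂ} (hf : InClassS f) : ContinuousOn f (ball (0 : ℂ) 1) :=
  fun z hz => (hf.1 z hz).continuousAt.continuousWithinAt

/-- The superlevel sets of Green's function are images of disks, which gives continuity without
inverting `f`. -/
lemma continuous_green {f : ℂ → ℂ} (hf : InClassS f) : Continuous (green f) := by
  rw [continuous_iff_continuousAt]
  intro ζ
  rw [ContinuousAt, tendsto_order]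
  constructor
  · intro a ha
    rcases lt_or_ge a 0 with h0 | h0
    · exact Eventually.of_forall fun ξ => h0.trans_le (green_nonneg f hf ξ)
    · have hset : {ξ | a < green f ξ} = Complex.exp ⁻¹' (f '' ball 0 (Real.exp (-a))) := by
        ext ξ
        simp [lt_green_iff hf h0]
      have ho : IsOpen {ξ | a < green f ξ} := by
        rw [hset]
        exact (isOpen_image hf (ball_subset_ball (by simpa using h0)) isOpen_ball).preimage
          Complex.continuous_exp
      exact ho.mem_nhds ha
  · intro a ha
    have h0 : 0 < a := (green_nonneg f hf ζ).trans_lt ha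
    have hset : {ξ | green f ξ < a} =
        (Complex.exp ⁻¹' (f '' closedBall 0 (Real.exp (-a))))ᶜ := by
      ext ξ
      rw [mem_compl_iff, mem_ofPred_eq, ← not_le, le_green_iff hf h0]
      simp
    have hc : IsCompact (f '' closedBall 0 (Real.exp (-a))) :=
      (isCompact_closedBall _ _).image_of_continuousOn
        ((continuousOn_of_class hf).mono (closedBall_subset_ball (by simpa using h0)))
    have ho : IsOpen {ξ | green f ξ < a} := by
      rw [hset]
      exact (hc.isClosed.preimage Complex.continuous_exp).isOpen_compl
    exact ho.mem_nhds ha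

/-- Green's function tends to zero uniformly at infinity. -/
lemma green_tail {f : ℂ → ℂ} (hf : InClassS f) {η : ℝ} (hη : 0 < η) :
    ∃ X : ℝ, ∀ ζ : ℂ, X ≤ ζ.re → green f ζ ≤ η := by
  have hc : IsCompact (f '' closedBall 0 (Real.exp (-η))) :=
    (isCompact_closedBall _ _).image_of_continuousOn
      ((continuousOn_of_class hf).mono (closedBall_subset_ball (by simpa using hη)))
  obtain ⟨C, hC⟩ := hc.isBounded.exists_norm_le
  refine ⟨C, fun ζ hζ => ?_⟩
  by_contra h
  push Not at h
  obtain ⟨z, hz, hfz⟩ := (le_green_iff hf hη ζ).1 h.le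
  have := hC (f z) ⟨z, by simpa using hz, rfl⟩
  rw [hfz, Complex.norm_exp] at this
  have := Real.add_one_le_exp ζ.re
  linarith

/-- The expansion `green f ζ = -re ζ + o(1)` at the pole, which reflects `f' 0 = 1`. -/
lemma green_pole {f : ℂ → ℂ} (hf : InClassS f) {η : ℝ} (hη : 0 < η) :
    ∃ X : ℝ, ∀ ζ : ℂ, ζ.re ≤ X → |green f ζ + ζ.re| ≤ η := by
  have hd : HasDerivAt f 1 0 := by
    have := (hf.1 0 (by simp)).differentiableAt.hasDerivAt
    rwa [hf.2.2.2] at this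
  have hs := hasDerivAt_iff_tendsto_slope.1 hd
  have hlog : Tendsto (fun z => Real.log ‖slope f 0 z‖) (𝓝[≠] 0) (𝓝 0) := by
    have h1 : ContinuousAt (fun w : ℂ => Real.log ‖w‖) 1 := by
      apply ContinuousAt.log
      · fun_prop
      · simp
    have := h1.tendsto.comp hs
    simpa [Function.comp_def] using this
  have hev : ∀ᶠ z in 𝓝[≠] (0 : ℂ), |Real.log ‖slope f 0 z‖| < η := by
    have := hlog.abs
    rw [abs_zero] at this
    exact this.eventually_lt_const hη
  rw [eventually_nhdsWithin_iff, Metric.eventually_nhds_iff_ball] at hev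
  obtain ⟨δ, hδ, hball⟩ := hev
  have ho : IsOpen (f '' ball 0 (min δ 1)) :=
    isOpen_image hf (ball_subset_ball (min_le_right _ _)) isOpen_ball
  have h0 : (0 : ℂ) ∈ f '' ball 0 (min δ 1) := ⟨0, by simp [hδ], hf.2.2.1⟩
  obtain ⟨ε, hε, hsub⟩ := Metric.isOpen_iff.1 ho 0 h0
  refine ⟨Real.log (ε / 2), fun ζ hζ => ?_⟩
  have hmem : Complex.exp ζ ∈ ball (0 : ℂ) ε := by
    rw [mem_ball_zero_iff, Complex.norm_exp]
    have := Real.exp_le_exp.2 hζ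
    rw [Real.exp_log (by positivity)] at this
    linarith
  obtain ⟨z, hz, hfz⟩ := hsub hmem
  have hz0 := ne_zero_of_eq_exp hf hfz
  have hzb : z ∈ ball (0 : ℂ) 1 := ball_subset_ball (min_le_right _ _) hz
  rw [green_eq hf hzb hfz]
  have h1 := hball z (ball_subset_ball (min_le_left _ _) hz) hz0
  have h2 : ‖slope f 0 z‖ = Real.exp ζ.re / ‖z‖ := by
    rw [slope_def_field, hf.2.2.1, hfz]
    simp [Complex.norm_exp]
  rw [h2, Real.log_div (Real.exp_pos _).ne' (norm_ne_zero_iff.2 hz0), Real.log_exp] at h1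
  rw [show -Real.log ‖z‖ + ζ.re = ζ.re - Real.log ‖z‖ by ring]
  exact h1.le

/-! ### Topology of the image domain and critical points -/

lemma exists_radius {f : ℂ → ℂ} (hf : InClassS f) {K : Set ℂ} (hK : IsCompact K)
    (hsub : K ⊆ f '' ball 0 1) : ∃ ρ : ℝ, 0 < ρ ∧ ρ < 1 ∧ K ⊆ f '' ball 0 ρ := by
  have hlt : ∀ n : ℕ, 1 - 1 / ((n : ℝ) + 2) < 1 := fun n => by
    have : 0 < 1 / ((n : ℝ) + 2) := by positivity
    linarith
  obtain ⟨n, hn⟩ := hK.elim_directed_cover (fun n : ℕ => f '' ball 0 (1 - 1 / ((n : ℝ) + 2)))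
    (fun n => isOpen_image hf (ball_subset_ball (hlt n).le) isOpen_ball)
    (by
      intro w hw
      obtain ⟨z, hz, rfl⟩ := hsub hw
      have hz' : 0 < 1 - ‖z‖ := by
        have := mem_ball_zero_iff.1 hz
        linarith
      obtain ⟨n, hn⟩ := exists_nat_one_div_lt hz'
      refine mem_iUnion.2 ⟨n, z, ?_, rfl⟩
      rw [mem_ball_zero_iff]
      have : 1 / ((n : ℝ) + 2) ≤ 1 / ((n : ℝ) + 1) :=
        one_div_le_one_div_of_le (by positivity) (by linarith)
      linarith)
    (by
      apply Monotone.directed_le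
      intro m n hmn
      apply image_mono
      apply ball_subset_ball
      have : (m : ℝ) ≤ n := by exact_mod_cast hmn
      have : 1 / ((n : ℝ) + 2) ≤ 1 / ((m : ℝ) + 2) :=
        one_div_le_one_div_of_le (by positivity) (by linarith)
      linarith)
  refine ⟨_, ?_, hlt n, hn⟩
  have : 1 / ((n : ℝ) + 2) ≤ 1 / 2 := one_div_le_one_div_of_le (by positivity) (by
    have : (0 : ℝ) ≤ n := by positivity
    linarith)
  linarith

lemma isPreconnected_annulus {ρ : ℝ} (hρ : 0 < ρ) :
    IsPreconnected {z : ℂ | ρ ≤ ‖z‖ ∧ ‖z‖ < 1} := by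
  have h : {z : ℂ | ρ ≤ ‖z‖ ∧ ‖z‖ < 1} =
      (fun p : ℝ × ℝ => (p.1 : ℂ) * Complex.exp (p.2 * I)) '' (Ico ρ 1 ×ˢ univ) := by
    ext z
    constructor
    · rintro ⟨h1, h2⟩
      refine ⟨(‖z‖, z.arg), ⟨⟨h1, h2⟩, trivial⟩, ?_⟩
      simp
    · rintro ⟨⟨r, t⟩, ⟨⟨h1, h2⟩, -⟩, rfl⟩
      have h0 : 0 ≤ r := hρ.le.trans h1
      simp only [mem_ofPred_eq, norm_mul, Complex.norm_exp_ofReal_mul_I, mul_one,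
        Complex.norm_real, Real.norm_eq_abs, abs_of_nonneg h0]
      exact ⟨h1, h2⟩
  rw [h]
  exact (isPreconnected_Ico.prod isPreconnected_univ).image _ (by fun_prop)

/-- The image domain is simply connected, in the form that is needed: together with a circle about
the origin it contains the disk bounded by that circle. -/
lemma closedBall_subset_image {f : ℂ → ℂ} (hf : InClassS f) {R : ℝ} (hR : 0 < R)
    (h : sphere (0 : ℂ) R ⊆ f '' ball 0 1) : closedBall (0 : ℂ) R ⊆ f '' ball 0 1 := by
  obtain ⟨ρ, hρ0, hρ1, hρ⟩ := exists_radius hf (isCompact_sphere 0 R) h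
  have hcont := continuousOn_of_class hf
  have hA : ∀ z : ℂ, ρ ≤ ‖z‖ → ‖z‖ < 1 → ‖f z‖ ≠ R := by
    intro z h1 h2 h3
    obtain ⟨z', hz', he⟩ := hρ (mem_sphere_zero_iff_norm.2 h3)
    have := hf.2.1 (ball_subset_ball hρ1.le hz') (mem_ball_zero_iff.2 h2) he
    subst this
    exact absurd (mem_ball_zero_iff.1 hz') (not_lt.2 h1)
  have hpre : IsPreconnected ((fun z => ‖f z‖) '' {z : ℂ | ρ ≤ ‖z‖ ∧ ‖z‖ < 1}) := by
    apply (isPreconnected_annulus hρ0).image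
    exact (hcont.mono fun z hz => mem_ball_zero_iff.2 hz.2).norm
  -- The annulus `ρ ≤ |z| < 1` is mapped entirely inside or entirely outside the circle; the former
  -- is excluded by the maximum principle, since `f` takes the value `R` in `|z| < ρ`.
  have hdich : (∀ z : ℂ, ρ ≤ ‖z‖ → ‖z‖ < 1 → ‖f z‖ < R) ∨
      (∀ z : ℂ, ρ ≤ ‖z‖ → ‖z‖ < 1 → R < ‖f z‖) := by
    by_contra hcon
    push Not at hcon
    obtain ⟨⟨z, hz1, hz2, hz3⟩, z', hz1', hz2', hz3'⟩ := hcon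
    obtain ⟨y, ⟨hy1, hy2⟩, hy3⟩ := hpre.ordConnected.out ⟨z', ⟨hz1', hz2'⟩, rfl⟩
      ⟨z, ⟨hz1, hz2⟩, rfl⟩ ⟨hz3', hz3⟩
    exact hA y hy1 hy2 hy3
  rcases hdich with hlt | hgt
  · exfalso
    have hne : (sphere (0 : ℂ) ρ).Nonempty := NormedSpace.sphere_nonempty.2 hρ0.le
    obtain ⟨z₀, hz₀, hmax⟩ := (isCompact_sphere (0 : ℂ) ρ).exists_isMaxOn hne
      (hcont.mono fun z hz => mem_ball_zero_iff.2 ((mem_sphere_zero_iff_norm.1 hz).trans_lt hρ1)).norm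
    have hz₀' := mem_sphere_zero_iff_norm.1 hz₀
    have h0 := hlt z₀ hz₀'.ge (hz₀'.trans_lt hρ1)
    obtain ⟨z₁, hz₁, he⟩ := hρ (mem_sphere_zero_iff_norm.2 (by simp [hR.le] : ‖(R : ℂ)‖ = R))
    have hd : DiffContOnCl ℂ f (ball 0 ρ) := by
      apply DifferentiableOn.diffContOnCl
      rw [closure_ball _ hρ0.ne']
      exact fun z hz => (hf.1 z (closedBall_subset_ball hρ1 hz)).differentiableAt.differentiableWithinAt
    have := Complex.norm_le_of_forall_mem_frontier_norm_le isBounded_ball hd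
      (C := ‖f z₀‖) (fun z hz => hmax (by rwa [frontier_ball _ hρ0.ne'] at hz)) (subset_closure hz₁)
    rw [he] at this
    simp [abs_of_pos hR] at this
    linarith
  · have hcl : closure (f '' ball 0 ρ) ⊆ f '' closedBall 0 ρ := by
      apply closure_minimal (image_mono ball_subset_closedBall)
      exact ((isCompact_closedBall _ _).image_of_continuousOn
        (hcont.mono (closedBall_subset_ball hρ1))).isClosed
    have hball : ball (0 : ℂ) R ⊆ f '' ball 0 ρ := by
      apply (convex_ball (0 : ℂ) R).isPreconnected.subset_of_closure_inter_subset
        (isOpen_image hf (ball_subset_ball hρ1.le) isOpen_ball)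
      · exact ⟨0, by simpa using hR, 0, by simpa using hρ0, hf.2.2.1⟩
      · rintro w ⟨hw, hwR⟩
        obtain ⟨z, hz, rfl⟩ := hcl hw
        rcases (mem_closedBall_zero_iff.1 hz).lt_or_eq with h1 | h1
        · exact ⟨z, mem_ball_zero_iff.2 h1, rfl⟩
        · exact absurd (mem_ball_zero_iff.1 hwR) (hgt z h1.ge (h1.trans_lt hρ1)).not_gt
    intro w hw
    rcases (mem_closedBall_zero_iff.1 hw).lt_or_eq with h1 | h1
    · exact image_mono (ball_subset_ball hρ1.le) (hball (mem_ball_zero_iff.2 h1))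
    · exact h (mem_sphere_zero_iff_norm.2 h1)

/-- Univalent functions have no critical points: at a critical point `f - f z₀` would be, up to
a constant, the `n`-th power of a local coordinate with `n ≥ 2`. -/
lemma deriv_ne_zero {f : ℂ → ℂ} (hf : InClassS f) {z₀ : ℂ} (hz₀ : z₀ ∈ ball (0 : ℂ) 1) :
    deriv f z₀ ≠ 0 := by
  have ha : AnalyticAt ℂ (fun z => f z - f z₀) z₀ := (hf.1 z₀ hz₀).sub analyticAt_const
  have hfin : analyticOrderAt (fun z => f z - f z₀) z₀ ≠ ⊤ := by
    rw [Ne, analyticOrderAt_eq_top]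
    intro hev
    have h1 : ∀ᶠ z in 𝓝[≠] z₀, f z - f z₀ = 0 ∧ z ∈ ball (0 : ℂ) 1 :=
      (hev.and (isOpen_ball.mem_nhds hz₀)).filter_mono nhdsWithin_le_nhds
    obtain ⟨z, ⟨hz, hzb⟩, hne⟩ := (h1.and self_mem_nhdsWithin).exists
    exact hne (hf.2.1 hzb hz₀ (sub_eq_zero.1 hz))
  obtain ⟨n, hn⟩ := ENat.ne_top_iff_exists.1 hfin
  obtain ⟨g, hg, hg0, hev⟩ := (ha.analyticOrderAt_eq_natCast).1 hn.symm
  have hn0 : n ≠ 0 := by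
    rintro rfl
    have := hev.self_of_nhds
    simp at this
    exact hg0 this.symm
  intro hder
  have hn1 : n ≠ 1 := by
    rintro rfl
    have h1 : HasDerivAt (fun z => f z - f z₀) 0 z₀ := by
      have := (hf.1 z₀ hz₀).differentiableAt.hasDerivAt.sub_const (f z₀)
      rwa [hder] at this
    have h2 : HasDerivAt (fun z => (z - z₀) ^ 1 • g z) (g z₀) z₀ := by
      have := ((hasDerivAt_id z₀).sub_const z₀).mul hg.differentiableAt.hasDerivAt
      simpa [Pi.mul_def] using this
    exact hg0 ((h2.congr_of_eventuallyEq hev).unique h1)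
  set G : ℂ → ℂ := fun z => (z - z₀) * Complex.exp (Complex.log (g z / g z₀) / n) with hG
  have hnC : (n : ℂ) ≠ 0 := by exact_mod_cast hn0
  have hroot : AnalyticAt ℂ (fun z => Complex.exp (Complex.log (g z / g z₀) / n)) z₀ := by
    have h1 : AnalyticAt ℂ (fun z => g z / g z₀) z₀ := hg.div analyticAt_const hg0
    have h2 : AnalyticAt ℂ (fun z => Complex.log (g z / g z₀)) z₀ :=
      h1.clog (by simp [hg0])
    exact (h2.div analyticAt_const hnC).cexp
  have hGd : HasStrictDerivAt G 1 z₀ := by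
    have h1 : AnalyticAt ℂ G z₀ := (analyticAt_id.sub analyticAt_const).mul hroot
    have h2 : deriv G z₀ = 1 := by
      have := ((hasDerivAt_id z₀).sub_const z₀).mul hroot.differentiableAt.hasDerivAt
      simpa [Pi.mul_def, hg0] using this.deriv
    simpa [h2] using h1.hasStrictDerivAt
  have hmap := hGd.map_nhds_eq one_ne_zero
  have hG0 : G z₀ = 0 := by simp [hG]
  have hgne : ∀ᶠ z in 𝓝 z₀, g z ≠ 0 := hg.continuousAt.eventually_ne hg0
  have hN : {z | f z - f z₀ = g z₀ * G z ^ n ∧ z ∈ ball (0 : ℂ) 1} ∈ 𝓝 z₀ := by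
    filter_upwards [hev, hgne, isOpen_ball.mem_nhds hz₀] with z h1 h2 h3
    refine ⟨?_, h3⟩
    rw [h1, hG, mul_pow, ← Complex.exp_nat_mul, mul_div_cancel₀ _ hnC,
      Complex.exp_log (div_ne_zero h2 hg0), smul_eq_mul]
    field_simp
  have himg : G '' {z | f z - f z₀ = g z₀ * G z ^ n ∧ z ∈ ball (0 : ℂ) 1} ∈ 𝓝 (0 : ℂ) := by
    have h := image_mem_map (m := G) hN
    rw [hmap, hG0] at h
    exact h
  set ω : ℂ := Complex.exp (2 * π * I / n)
  have hω : IsPrimitiveRoot ω n := Complex.isPrimitiveRoot_exp n hn0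
  have hmul : Tendsto (fun t : ℂ => t * ω) (𝓝 0) (𝓝 0) := by
    have : Continuous (fun t : ℂ => t * ω) := by fun_prop
    simpa using this.tendsto 0
  -- `G` attains both `t` and `t ω`, whose `n`-th powers agree.
  have hboth : ∀ᶠ t in 𝓝[≠] (0 : ℂ),
      t ∈ G '' {z | f z - f z₀ = g z₀ * G z ^ n ∧ z ∈ ball (0 : ℂ) 1} ∧
      t * ω ∈ G '' {z | f z - f z₀ = g z₀ * G z ^ n ∧ z ∈ ball (0 : ℂ) 1} :=
    (Filter.Eventually.and himg (hmul himg)).filter_mono nhdsWithin_le_nhds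
  obtain ⟨t, ⟨⟨z₁, ⟨h1, h1b⟩, e1⟩, z₂, ⟨h2, h2b⟩, e2⟩, ht0⟩ :=
    (hboth.and self_mem_nhdsWithin).exists
  have : f z₁ = f z₂ := by
    have : f z₁ - f z₀ = f z₂ - f z₀ := by
      rw [h1, h2, e1, e2, mul_pow, hω.pow_eq_one, mul_one]
    exact sub_left_inj.1 this
  have h12 := hf.2.1 h1b h2b this
  rw [h12, e2] at e1
  have hω1 : ω = 1 := mul_left_cancel₀ ht0 (by rw [e1, mul_one])
  exact hn1 (hω.unique (hω1 ▸ IsPrimitiveRoot.one))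

/-! ### Jensen's formula and subharmonicity -/

lemma circleMap_mem_unitBall {ρ : ℝ} (h0 : 0 < ρ) (h1 : ρ < 1) (θ : ℝ) :
    circleMap 0 ρ θ ∈ ball (0 : ℂ) 1 := by
  rw [mem_ball_zero_iff, norm_circleMap_zero, abs_of_pos h0]
  exact h1

lemma analyticOnNhd_sub_const {f : ℂ → ℂ} (hf : InClassS f) {ρ : ℝ} (h1 : ρ < 1) (w : ℂ) :
    AnalyticOnNhd ℂ (fun z => f z - w) (closedBall 0 ρ) :=
  fun z hz => (hf.1 z (closedBall_subset_ball h1 hz)).sub analyticAt_const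

lemma circleIntegrable_log_sub {f : ℂ → ℂ} (hf : InClassS f) {ρ : ℝ} (h0 : 0 < ρ) (h1 : ρ < 1)
    (w : ℂ) : CircleIntegrable (fun z => Real.log ‖f z - w‖) 0 ρ := by
  apply MeromorphicOn.circleIntegrable_log_norm (f := fun z => f z - w)
  rw [abs_of_pos h0]
  exact fun z hz => (analyticOnNhd_sub_const hf h1 w z (sphere_subset_closedBall hz)).meromorphicAt

/-- Jensen's formula for `f - exp ζ`, which has at most one zero, and a simple one, in the disk. -/
lemma circleAverage_log_sub {f : ℂ → ℂ} (hf : InClassS f) {ρ : ℝ} (h0 : 0 < ρ) (h1 : ρ < 1)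
    (ζ : ℂ) : circleAverage (fun z => Real.log ‖f z - Complex.exp ζ‖) 0 ρ =
      ζ.re + max (green f ζ + Real.log ρ) 0 := by
  by_cases hex : ∃ z ∈ closedBall (0 : ℂ) ρ, f z = Complex.exp ζ
  · obtain ⟨a, ha, hfa⟩ := hex
    have ha1 : a ∈ ball (0 : ℂ) 1 := closedBall_subset_ball h1 ha
    have ha0 := ne_zero_of_eq_exp hf hfa
    have hd : AnalyticOnNhd ℂ (dslope f a) (ball 0 1) := by
      apply DifferentiableOn.analyticOnNhd _ isOpen_ball
      rw [Complex.differentiableOn_dslope (isOpen_ball.mem_nhds ha1)]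
      exact hf.1.differentiableOn
    have hfac : ∀ z, f z - Complex.exp ζ = (z - a) * dslope f a z := fun z => by
      rw [← smul_eq_mul, sub_smul_dslope, hfa]
    have hne : ∀ z ∈ ball (0 : ℂ) 1, dslope f a z ≠ 0 := by
      intro z hz h
      by_cases hza : z = a
      · subst hza
        rw [dslope_same] at h
        exact deriv_ne_zero hf hz h
      · have := hfac z
        rw [h, mul_zero, ← hfa, sub_eq_zero] at this
        exact hza (hf.2.1 hz ha1 this)
    have hsub : closedBall (0 : ℂ) |ρ| ⊆ ball 0 1 := by
      rw [abs_of_pos h0]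
      exact closedBall_subset_ball h1
    have hsplit : circleAverage (fun z => Real.log ‖f z - Complex.exp ζ‖) 0 ρ =
        circleAverage (fun z => Real.log ‖z - a‖ + Real.log ‖dslope f a z‖) 0 ρ := by
      apply circleAverage_congr_codiscreteWithin _ h0.ne'
      filter_upwards [compl_singleton_mem_codiscreteWithin (s := sphere 0 |ρ|) a,
        self_mem_codiscreteWithin (sphere (0 : ℂ) |ρ|)] with z hz hz'
      rw [hfac, norm_mul, Real.log_mul]
      · exact norm_ne_zero_iff.2 (sub_ne_zero.2 hz)
      · exact norm_ne_zero_iff.2 (hne z (hsub (sphere_subset_closedBall hz')))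
    rw [hsplit, circleAverage_fun_add (circleIntegrable_log_norm_sub_const ρ)
      (MeromorphicOn.circleIntegrable_log_norm fun z hz =>
        (hd z (hsub (sphere_subset_closedBall hz))).meromorphicAt),
      circleAverage_log_norm_sub_const_of_mem_closedBall (by rwa [abs_of_pos h0]),
      AnalyticOnNhd.circleAverage_log_norm_of_ne_zero (fun z hz => hd z (hsub hz))
        (fun z hz => hne z (hsub hz)), green_eq hf ha1 hfa]
    have h2 : Real.log ‖dslope f a 0‖ = ζ.re - Real.log ‖a‖ := by
      have h3 := congrArg (fun w => Real.log ‖w‖) (hfac 0)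
      simp only [hf.2.2.1, zero_sub, norm_neg, norm_mul, Complex.norm_exp, Real.log_exp] at h3
      rw [Real.log_mul (norm_ne_zero_iff.2 ha0) (norm_ne_zero_iff.2 (hne 0 (by simp)))] at h3
      linarith
    have h4 : Real.log ‖a‖ ≤ Real.log ρ :=
      Real.log_le_log (norm_pos_iff.2 ha0) (mem_closedBall_zero_iff.1 ha)
    rw [h2, max_eq_left (by linarith)]
    ring
  · push Not at hex
    have h2 := AnalyticOnNhd.circleAverage_log_norm_of_ne_zero (R := ρ) (c := 0)
      (g := fun z => f z - Complex.exp ζ)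
      (by rw [abs_of_pos h0]; exact analyticOnNhd_sub_const hf h1 _)
      (by rw [abs_of_pos h0]; exact fun z hz => sub_ne_zero.2 (hex z hz))
    rw [h2, hf.2.2.1, zero_sub, norm_neg, Complex.norm_exp, Real.log_exp, max_eq_right, add_zero]
    by_contra h
    push Not at h
    have h3 : -Real.log ρ < green f ζ := by linarith
    rw [lt_green_iff hf (by linarith [Real.log_neg h0 h1]), neg_neg, Real.exp_log h0] at h3
    obtain ⟨z, hz, hfz⟩ := h3
    exact hex z (mem_closedBall_zero_iff.2 hz.le) hfz

/-- Absolute integrability of the logarithmic kernel, as needed for Fubini. -/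
lemma integrable_log_kernel {f : ℂ → ℂ} (hf : InClassS f) {ρ : ℝ} (h0 : 0 < ρ) (h1 : ρ < 1)
    {ξ : ℝ → ℂ} (hξ : Continuous ξ) :
    Integrable (fun p : ℝ × ℝ => Real.log ‖f (circleMap 0 ρ p.1) - Complex.exp (ξ p.2)‖)
      ((volume.restrict (Ioc 0 (2 * π))).prod (volume.restrict (Ioc 0 (2 * π)))) := by
  have hc : Continuous fun θ => f (circleMap 0 ρ θ) :=
    (continuousOn_of_class hf).comp_continuous (continuous_circleMap 0 ρ)
      (circleMap_mem_unitBall h0 h1)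
  have hm : Measurable
      (fun p : ℝ × ℝ => Real.log ‖f (circleMap 0 ρ p.1) - Complex.exp (ξ p.2)‖) := by
    apply Measurable.log
    apply Continuous.measurable
    exact ((hc.comp continuous_fst).sub
      (Complex.continuous_exp.comp (hξ.comp continuous_snd))).norm
  obtain ⟨A, hA⟩ := (isCompact_Icc (a := 0) (b := 2 * π)).exists_bound_of_continuousOn
    hc.continuousOn
  obtain ⟨B, hB⟩ := (isCompact_Icc (a := 0) (b := 2 * π)).exists_bound_of_continuousOn
    (Complex.continuous_exp.comp hξ).continuousOn
  obtain ⟨D, hD⟩ := (isCompact_Icc (a := 0) (b := 2 * π)).exists_bound_of_continuousOn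
    hξ.continuousOn
  have hslice : ∀ α : ℝ, Integrable
      (fun θ => Real.log ‖f (circleMap 0 ρ θ) - Complex.exp (ξ α)‖)
      (volume.restrict (Ioc 0 (2 * π))) := fun α =>
    (intervalIntegrable_iff_integrableOn_Ioc_of_le two_pi_pos.le).1
      (circleIntegrable_log_sub hf h0 h1 (Complex.exp (ξ α)))
  have hle : ∀ θ ∈ Ioc 0 (2 * π), ∀ α ∈ Ioc 0 (2 * π),
      Real.log ‖f (circleMap 0 ρ θ) - Complex.exp (ξ α)‖ ≤ A + B := by
    intro θ hθ α hα
    refine (Real.log_le_self (norm_nonneg _)).trans ((norm_sub_le _ _).trans ?_)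
    exact add_le_add (hA θ (Ioc_subset_Icc_self hθ)) (hB α (Ioc_subset_Icc_self hα))
  have hAB : 0 ≤ A + B :=
    add_nonneg ((norm_nonneg _).trans (hA 0 ⟨le_rfl, two_pi_pos.le⟩))
      ((norm_nonneg _).trans (hB 0 ⟨le_rfl, two_pi_pos.le⟩))
  refine (integrable_prod_iff' hm.aestronglyMeasurable).2 ⟨Eventually.of_forall hslice, ?_⟩
  apply Integrable.mono' (g := fun _ => 2 * π * (2 * (A + B) + D)) (integrable_const _)
  · exact (hm.norm.stronglyMeasurable.integral_prod_left'
      (μ := volume.restrict (Ioc 0 (2 * π)))).aestronglyMeasurable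
  · filter_upwards [ae_restrict_mem measurableSet_Ioc] with α hα
    rw [Real.norm_of_nonneg (integral_nonneg fun _ => norm_nonneg _)]
    have hpt : ∫ θ in Ioc 0 (2 * π), ‖Real.log ‖f (circleMap 0 ρ θ) - Complex.exp (ξ α)‖‖ ≤
        ∫ θ in Ioc 0 (2 * π), (2 * (A + B) -
          Real.log ‖f (circleMap 0 ρ θ) - Complex.exp (ξ α)‖) := by
      apply setIntegral_mono_on (hslice α).norm ((integrable_const _).sub (hslice α))
        measurableSet_Ioc
      intro θ hθ
      have := hle θ hθ α hα
      rw [Real.norm_eq_abs]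
      simp only [Pi.sub_apply]
      exact abs_le.2 ⟨by linarith, by linarith⟩
    refine hpt.trans ?_
    rw [integral_sub (integrable_const _) (hslice α)]
    have hJ := circleAverage_log_sub hf h0 h1 (ξ α)
    rw [circleAverage_def, intervalIntegral.integral_of_le two_pi_pos.le, smul_eq_mul,
      inv_mul_eq_iff_eq_mul₀ two_pi_pos.ne'] at hJ
    rw [hJ, setIntegral_const, Measure.real, Real.volume_Ioc, sub_zero,
      ENNReal.toReal_ofReal two_pi_pos.le, smul_eq_mul, ← mul_sub]
    apply mul_le_mul_of_nonneg_left _ two_pi_pos.le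
    have h3 := abs_le.1 ((Complex.abs_re_le_norm _).trans (hD α (Ioc_subset_Icc_self hα)))
    have h4 := le_max_right (green f (ξ α) + Real.log ρ) 0
    linarith

/-- Fubini for the logarithmic kernel: the inner integral is evaluated by Jensen's formula, which
produces the truncated Green's function. -/
lemma integral_log_kernel_swap {f : ℂ → ℂ} (hf : InClassS f) {ρ : ℝ} (h0 : 0 < ρ) (h1 : ρ < 1)
    {ξ : ℝ → ℂ} (hξ : Continuous ξ) :
    ∫ θ in 0..2 * π, (∫ α in 0..2 * π,
        Real.log ‖f (circleMap 0 ρ θ) - Complex.exp (ξ α)‖) =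
      2 * π * ∫ α in 0..2 * π, ((ξ α).re + max (green f (ξ α) + Real.log ρ) 0) := by
  rw [intervalIntegral_intervalIntegral_swap, ← intervalIntegral.integral_const_mul]
  · apply intervalIntegral.integral_congr
    intro α _
    have hJ := circleAverage_log_sub hf h0 h1 (ξ α)
    rwa [circleAverage_def, smul_eq_mul, inv_mul_eq_iff_eq_mul₀ two_pi_pos.ne'] at hJ
  · rw [IntegrableOn, Measure.volume_eq_prod, ← Measure.prod_restrict, uIoc_of_le two_pi_pos.le]
    exact integrable_log_kernel hf h0 h1 hξ

lemma submean_log {h : ℂ → ℂ} {c : ℂ} {r : ℝ} (hr : 0 < r)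
    (hh : AnalyticOnNhd ℂ h (closedBall c r)) (hc : h c ≠ 0) :
    Real.log ‖h c‖ ≤ circleAverage (fun z => Real.log ‖h z‖) c r := by
  have hh' : AnalyticOnNhd ℂ h (closedBall c |r|) := by rwa [abs_of_pos hr]
  rw [AnalyticOnNhd.circleAverage_log_norm hr.ne' hh' hc]
  have : 0 ≤ ∑ᶠ u, (MeromorphicOn.divisor h (closedBall c |r|) u : ℝ) *
      Real.log (r * ‖c - u‖⁻¹) := by
    apply finsum_nonneg
    intro u
    by_cases hu : u ∈ closedBall c |r|
    · apply mul_nonneg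
      · exact_mod_cast (MeromorphicOn.AnalyticOnNhd.divisor_nonneg hh') u
      · rw [abs_of_pos hr, mem_closedBall, dist_comm, dist_eq_norm] at hu
        rcases eq_or_ne ‖c - u‖ 0 with h2 | h2
        · simp [h2]
        · apply Real.log_nonneg
          rw [← div_eq_mul_inv, le_div_iff₀ (lt_of_le_of_ne (norm_nonneg _) h2.symm)]
          linarith
    · simp [hu]
  linarith

lemma circleAverage_re (c : ℂ) (r : ℝ) : circleAverage (fun z => z.re) c r = c.re := by
  simp [circleAverage_def, circleMap, intervalIntegral.integral_add, Complex.exp_ofReal_mul_I_re]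
  field_simp

/-- Green's function is subharmonic; thanks to Jensen's formula this holds on circles of any
radius at once. -/
lemma green_submean {f : ℂ → ℂ} (hf : InClassS f) (ζ₀ : ℂ) {r : ℝ} (hr : 0 < r) :
    green f ζ₀ ≤ circleAverage (green f) ζ₀ r := by
  have hgi : ∀ {g : ℂ → ℝ}, Continuous g → CircleIntegrable g ζ₀ r := fun hg =>
    hg.continuousOn.circleIntegrable hr.le
  apply le_of_forall_pos_le_add
  intro ε hε
  set ρ := Real.exp (-ε) with hρ
  have h0 : 0 < ρ := Real.exp_pos _
  have h1 : ρ < 1 := by simpa [hρ] using hε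
  have hlog : Real.log ρ = -ε := Real.log_exp _
  have hswap := integral_log_kernel_swap hf h0 h1 (continuous_circleMap ζ₀ r)
  have hinner : ∀ θ, f (circleMap 0 ρ θ) ≠ Complex.exp ζ₀ →
      2 * π * Real.log ‖f (circleMap 0 ρ θ) - Complex.exp ζ₀‖ ≤ ∫ α in 0..2 * π,
        Real.log ‖f (circleMap 0 ρ θ) - Complex.exp (circleMap ζ₀ r α)‖ := by
    intro θ hθ
    have := submean_log (h := fun ζ => f (circleMap 0 ρ θ) - Complex.exp ζ) (c := ζ₀) hr
      (fun z _ => by fun_prop) (sub_ne_zero.2 hθ)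
    rwa [circleAverage_def, smul_eq_mul, le_inv_mul_iff₀ two_pi_pos] at this
  have hae : ∀ᵐ θ ∂(volume.restrict (Icc 0 (2 * π))), f (circleMap 0 ρ θ) ≠ Complex.exp ζ₀ := by
    by_cases hex : ∃ a ∈ ball (0 : ℂ) 1, f a = Complex.exp ζ₀
    · obtain ⟨a, ha, hfa⟩ := hex
      have h2 : circleMap 0 ρ ⁻¹' {a}ᶜ ∈ codiscreteWithin (Icc 0 (2 * π)) :=
        codiscreteWithin_mono (by tauto) (circleMap_preimage_codiscrete h0.ne'
          (compl_singleton_mem_codiscreteWithin (s := sphere 0 |ρ|) a))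
      filter_upwards [ae_restrict_le_codiscreteWithin measurableSet_Icc h2] with θ hθ h3
      exact hθ (hf.2.1 (circleMap_mem_unitBall h0 h1 θ) ha (h3.trans hfa.symm))
    · push Not at hex
      exact Eventually.of_forall fun θ => hex _ (circleMap_mem_unitBall h0 h1 θ)
  have hInt : IntervalIntegrable (fun θ => ∫ α in 0..2 * π,
      Real.log ‖f (circleMap 0 ρ θ) - Complex.exp (circleMap ζ₀ r α)‖) volume 0 (2 * π) := by
    rw [intervalIntegrable_iff_integrableOn_Ioc_of_le two_pi_pos.le]
    simp_rw [intervalIntegral.integral_of_le two_pi_pos.le]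
    exact (integrable_log_kernel hf h0 h1 (continuous_circleMap ζ₀ r)).integral_prod_left
  have hmono := intervalIntegral.integral_mono_ae_restrict two_pi_pos.le
    ((circleIntegrable_log_sub hf h0 h1 (Complex.exp ζ₀)).const_mul (2 * π)) hInt
    (hae.mono hinner)
  have hJ := circleAverage_log_sub hf h0 h1 ζ₀
  rw [circleAverage_def, smul_eq_mul, inv_mul_eq_iff_eq_mul₀ two_pi_pos.ne'] at hJ
  rw [intervalIntegral.integral_const_mul, hJ, hswap] at hmono
  have hmono' := le_of_mul_le_mul_left hmono two_pi_pos
  rw [← le_inv_mul_iff₀ two_pi_pos, ← smul_eq_mul, ← circleAverage_def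
    (f := fun ζ => ζ.re + max (green f ζ + Real.log ρ) 0)] at hmono'
  have hcg := continuous_green hf
  rw [circleAverage_fun_add (hgi Complex.continuous_re) (hgi (by fun_prop)), circleAverage_re,
    hlog] at hmono'
  have h5 : circleAverage (fun ζ => max (green f ζ + -ε) 0) ζ₀ r ≤
      circleAverage (green f) ζ₀ r := by
    apply circleAverage_mono (hgi (by fun_prop)) (hgi hcg)
    intro ζ _
    exact max_le (by linarith) (green_nonneg f hf ζ)
  have := le_max_left (green f ζ₀ + -ε) 0
  linarith

/-! ### Circular means of Green's function -/

/-- The integral of Green's function over the circle of radius `exp x` about the origin. -/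
noncomputable def greenMean (f : ℂ → ℂ) (x : ℝ) : ℝ :=
  ∫ s in 0..2 * π, green f (x + s * I)

lemma green_add_two_pi (f : ℂ → ℂ) (ζ : ℂ) : green f (ζ + 2 * π * I) = green f ζ :=
  green_congr f (Complex.exp_periodic ζ)

lemma green_periodic (f : ℂ → ℂ) (x : ℝ) :
    Function.Periodic (fun s : ℝ => green f (x + s * I)) (2 * π) := by
  intro s
  have h : (x : ℂ) + ((s + 2 * π : ℝ) : ℂ) * I = x + s * I + 2 * π * I := by
    push_cast
    ring
  simp only [h, green_add_two_pi]

lemma greenMean_eq (f : ℂ → ℂ) (x t : ℝ) :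
    greenMean f x = ∫ s in t..t + 2 * π, green f (x + s * I) := by
  have := (green_periodic f x).intervalIntegral_add_eq 0 t
  rw [zero_add] at this
  exact this

lemma continuous_green_vertical {f : ℂ → ℂ} (hf : InClassS f) (x : ℝ) :
    Continuous fun s : ℝ => green f (x + s * I) :=
  (continuous_green hf).comp (by fun_prop)

lemma f_circleMap_ne_zero {f : ℂ → ℂ} (hf : InClassS f) {ρ : ℝ} (h0 : 0 < ρ) (h1 : ρ < 1) (θ : ℝ) :
    f (circleMap 0 ρ θ) ≠ 0 := by
  intro h
  have := hf.2.1 (circleMap_mem_unitBall h0 h1 θ) (by simp : (0 : ℂ) ∈ ball (0 : ℂ) 1)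
    (h.trans hf.2.2.1.symm)
  exact circleMap_ne_center h0.ne' this

lemma continuous_log_f {f : ℂ → ℂ} (hf : InClassS f) {ρ : ℝ} (h0 : 0 < ρ) (h1 : ρ < 1) :
    Continuous fun θ => Real.log ‖f (circleMap 0 ρ θ)‖ := by
  have hc : Continuous fun θ => f (circleMap 0 ρ θ) :=
    (continuousOn_of_class hf).comp_continuous (continuous_circleMap 0 ρ)
      (circleMap_mem_unitBall h0 h1)
  exact hc.norm.log fun θ => norm_ne_zero_iff.2 (f_circleMap_ne_zero hf h0 h1 θ)

lemma integral_log_norm_sub_exp (x : ℝ) {c : ℂ} (hc : c ≠ 0) :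
    ∫ α in 0..2 * π, Real.log ‖c - Complex.exp (x + α * I)‖ =
      2 * π * (x + max (Real.log ‖c‖ - x) 0) := by
  have h := circleAverage_log_norm_sub_const_eq_log_radius_add_posLog (a := c) (c := 0)
    (R := Real.exp x) (Real.exp_pos x).ne'
  rw [circleAverage_def, smul_eq_mul, inv_mul_eq_iff_eq_mul₀ two_pi_pos.ne', Real.log_exp,
    zero_sub, norm_neg, Real.posLog_def, Pi.sup_apply, Pi.zero_apply, Real.log_mul (inv_ne_zero (Real.exp_pos x).ne')
      (norm_ne_zero_iff.2 hc), Real.log_inv, Real.log_exp, max_comm, neg_add_eq_sub] at h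
  rw [← h]
  apply intervalIntegral.integral_congr
  intro α _
  simp only [circleMap, zero_add]
  rw [norm_sub_rev, Complex.exp_add, Complex.ofReal_exp]

/-- Integrating Jensen's formula over a circle in the `w`-plane exchanges Green's function of the
image of `{|z| < ρ}` for the boundary values of `log |f|` on `|z| = ρ`. -/
lemma integral_max_green {f : ℂ → ℂ} (hf : InClassS f) {ρ : ℝ} (h0 : 0 < ρ) (h1 : ρ < 1) (x : ℝ) :
    ∫ α in 0..2 * π, max (green f (x + α * I) + Real.log ρ) 0 =
      ∫ θ in 0..2 * π, max (Real.log ‖f (circleMap 0 ρ θ)‖ - x) 0 := by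
  have hlog := continuous_log_f hf h0 h1
  have hg := continuous_green_vertical hf x
  have h := integral_log_kernel_swap hf h0 h1 (ξ := fun α : ℝ => x + α * I) (by fun_prop)
  simp_rw [fun θ => integral_log_norm_sub_exp x (f_circleMap_ne_zero hf h0 h1 θ)] at h
  rw [intervalIntegral.integral_const_mul] at h
  have h := mul_left_cancel₀ two_pi_pos.ne' h
  rw [intervalIntegral.integral_add, intervalIntegral.integral_add] at h
  · simp at h
    exact h.symm
  all_goals apply Continuous.intervalIntegrable
  all_goals fun_prop

/-- The mean of `log |f z|` on `|z| = ρ` is `log ρ`, since `f z / z` has no zeros and value `1` at `0`. -/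
lemma integral_log_f {f : ℂ → ℂ} (hf : InClassS f) {ρ : ℝ} (h0 : 0 < ρ) (h1 : ρ < 1) :
    ∫ θ in 0..2 * π, Real.log ‖f (circleMap 0 ρ θ)‖ = 2 * π * Real.log ρ := by
  have hd : AnalyticOnNhd ℂ (dslope f 0) (ball 0 1) := by
    apply DifferentiableOn.analyticOnNhd _ isOpen_ball
    rw [Complex.differentiableOn_dslope (isOpen_ball.mem_nhds (by simp))]
    exact hf.1.differentiableOn
  have hfac : ∀ z, f z = z * dslope f 0 z := fun z => by
    have := sub_smul_dslope f 0 z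
    rw [hf.2.2.1, sub_zero, sub_zero, smul_eq_mul] at this
    exact this.symm
  have hne : ∀ z ∈ ball (0 : ℂ) 1, dslope f 0 z ≠ 0 := by
    intro z hz h
    by_cases hza : z = 0
    · subst hza
      rw [dslope_same, hf.2.2.2] at h
      exact one_ne_zero h
    · have := hfac z
      rw [h, mul_zero, ← hf.2.2.1] at this
      exact hza (hf.2.1 hz (by simp) this)
  have hsub : closedBall (0 : ℂ) |ρ| ⊆ ball 0 1 := by
    rw [abs_of_pos h0]
    exact closedBall_subset_ball h1
  have h := AnalyticOnNhd.circleAverage_log_norm_of_ne_zero (fun z hz => hd z (hsub hz))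
    (fun z hz => hne z (hsub hz))
  rw [dslope_same, hf.2.2.2, norm_one, Real.log_one, circleAverage_def, smul_eq_mul,
    inv_mul_eq_iff_eq_mul₀ two_pi_pos.ne', mul_zero] at h
  have h2 : ∀ θ, Real.log ‖dslope f 0 (circleMap 0 ρ θ)‖ =
      Real.log ‖f (circleMap 0 ρ θ)‖ - Real.log ρ := by
    intro θ
    have h3 := hne _ (circleMap_mem_unitBall h0 h1 θ)
    rw [hfac (circleMap 0 ρ θ), norm_mul, norm_circleMap_zero, abs_of_pos h0,
      Real.log_mul h0.ne' (norm_ne_zero_iff.2 h3)]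
    ring
  simp_rw [h2] at h
  rw [intervalIntegral.integral_sub ((continuous_log_f hf h0 h1).intervalIntegrable _ _)
    intervalIntegrable_const, sub_eq_zero] at h
  rw [h]
  simp

lemma neg_le_greenMean {f : ℂ → ℂ} (hf : InClassS f) (x : ℝ) : -(2 * π * x) ≤ greenMean f x := by
  apply le_of_forall_pos_le_add
  intro ε' hε'
  obtain ⟨ε, hε, rfl⟩ : ∃ ε, 0 < ε ∧ ε' = 2 * π * ε :=
    ⟨ε' / (2 * π), by positivity, by field_simp⟩
  have h0 : 0 < Real.exp (-ε) := Real.exp_pos _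
  have h1 : Real.exp (-ε) < 1 := by simpa using hε
  have hlog := continuous_log_f hf h0 h1
  have hg := continuous_green_vertical hf x
  have h := integral_max_green hf h0 h1 x
  have h2 := integral_log_f hf h0 h1
  rw [Real.log_exp] at h h2
  have h3 : ∫ α in 0..2 * π, max (green f (x + α * I) + -ε) 0 ≤ greenMean f x := by
    apply intervalIntegral.integral_mono_on two_pi_pos.le
      (Continuous.intervalIntegrable (by fun_prop) _ _) (hg.intervalIntegrable _ _)
    intro α _
    exact max_le (by linarith) (green_nonneg f hf _)
  have h4 : ∫ θ in 0..2 * π, (Real.log ‖f (circleMap 0 (Real.exp (-ε)) θ)‖ - x) ≤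
      ∫ θ in 0..2 * π, max (Real.log ‖f (circleMap 0 (Real.exp (-ε)) θ)‖ - x) 0 := by
    apply intervalIntegral.integral_mono_on two_pi_pos.le
      (Continuous.intervalIntegrable (by fun_prop) _ _)
      (Continuous.intervalIntegrable (by fun_prop) _ _)
    intro θ _
    exact le_max_left _ _
  rw [intervalIntegral.integral_sub (hlog.intervalIntegrable _ _) intervalIntegrable_const, h2]
    at h4
  simp at h4
  linarith

lemma greenMean_eq_of_subset {f : ℂ → ℂ} (hf : InClassS f) {x : ℝ}
    (h : closedBall 0 (Real.exp x) ⊆ f '' ball 0 1) : greenMean f x = -(2 * π * x) := by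
  apply le_antisymm _ (neg_le_greenMean hf x)
  obtain ⟨ρ, h0, h1, hρ⟩ := exists_radius hf (isCompact_closedBall _ _) h
  have hlog := continuous_log_f hf h0 h1
  have hg := continuous_green_vertical hf x
  have h2 := integral_log_f hf h0 h1
  have h3 : ∀ θ, max (Real.log ‖f (circleMap 0 ρ θ)‖ - x) 0 =
      Real.log ‖f (circleMap 0 ρ θ)‖ - x := by
    intro θ
    apply max_eq_left
    by_contra hcon
    push Not at hcon
    have h4 : ‖f (circleMap 0 ρ θ)‖ ≤ Real.exp x :=
      (Real.log_le_iff_le_exp (norm_pos_iff.2 (f_circleMap_ne_zero hf h0 h1 θ))).1 (by linarith)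
    obtain ⟨z, hz, hfz⟩ := hρ (mem_closedBall_zero_iff.2 h4)
    have := hf.2.1 (ball_subset_ball h1.le hz) (circleMap_mem_unitBall h0 h1 θ) hfz
    subst this
    rw [mem_ball_zero_iff, norm_circleMap_zero, abs_of_pos h0] at hz
    exact hz.false
  have h4 := integral_max_green hf h0 h1 x
  simp_rw [h3] at h4
  rw [intervalIntegral.integral_sub (hlog.intervalIntegrable _ _) intervalIntegrable_const, h2]
    at h4
  have h5 : ∫ α in 0..2 * π, (green f (x + α * I) + Real.log ρ) ≤
      ∫ α in 0..2 * π, max (green f (x + α * I) + Real.log ρ) 0 := by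
    apply intervalIntegral.integral_mono_on two_pi_pos.le
      (Continuous.intervalIntegrable (by fun_prop) _ _)
      (Continuous.intervalIntegrable (by fun_prop) _ _)
    intro θ _
    exact le_max_left _ _
  rw [intervalIntegral.integral_add (hg.intervalIntegrable _ _) intervalIntegrable_const] at h5
  simp at h4 h5
  unfold greenMean
  linarith

lemma greenMean_nonneg {f : ℂ → ℂ} (hf : InClassS f) (x : ℝ) : 0 ≤ greenMean f x :=
  intervalIntegral.integral_nonneg two_pi_pos.le fun _ _ => green_nonneg f hf _

/-! ### The Koebe function -/

/-- The Koebe function. -/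
noncomputable def koebe (z : ℂ) : ℂ := z / (1 - z) ^ 2

/-- The inverse of the Koebe function on `ℂ ∖ (-∞, -1/4]`. -/
noncomputable def koebeInv (w : ℂ) : ℂ :=
  (Complex.exp (Complex.log (1 + 4 * w) / 2) - 1) / (Complex.exp (Complex.log (1 + 4 * w) / 2) + 1)

lemma one_sub_ne_zero {z : ℂ} (hz : z ∈ ball (0 : ℂ) 1) : 1 - z ≠ 0 := by
  rw [sub_ne_zero]
  rintro rfl
  simp at hz

lemma koebe_mem : InClassS koebe := by
  refine ⟨?_, ?_, by simp [koebe], ?_⟩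
  · intro z hz
    have := one_sub_ne_zero hz
    unfold koebe
    fun_prop (disch := simpa using this)
  · intro z hz w hw h
    have h1 := one_sub_ne_zero hz
    have h2 := one_sub_ne_zero hw
    unfold koebe at h
    rw [div_eq_div_iff (pow_ne_zero 2 h1) (pow_ne_zero 2 h2)] at h
    have h3 : (z - w) * (1 - z * w) = 0 := by linear_combination h
    rcases mul_eq_zero.1 h3 with h4 | h4
    · exact sub_eq_zero.1 h4
    · exfalso
      have : ‖z * w‖ < 1 := by
        rw [norm_mul]
        exact mul_lt_one_of_nonneg_of_lt_one_left (norm_nonneg _) (mem_ball_zero_iff.1 hz)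
          (mem_ball_zero_iff.1 hw).le
      rw [← sub_eq_zero.1 h4] at this
      simp at this
  · have h1 : HasDerivAt (fun z : ℂ => (1 - z) ^ 2) (-2) 0 := by
      have := ((hasDerivAt_id (0 : ℂ)).const_sub 1).pow 2
      simpa [Pi.pow_def] using this
    have := (hasDerivAt_id (0 : ℂ)).div h1 (by simp)
    simpa [koebe, Pi.div_def, funext_iff] using! this.deriv

lemma sqrt_re_pos {u : ℂ} (hu : u ∈ slitPlane) : 0 < (Complex.exp (Complex.log u / 2)).re := by
  rw [Complex.exp_re]
  apply mul_pos (Real.exp_pos _)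
  have h1 : (Complex.log u / 2).im = u.arg / 2 := by
    rw [show (2 : ℂ) = ((2 : ℝ) : ℂ) by norm_num, Complex.div_ofReal_im, Complex.log_im]
  rw [h1]
  apply Real.cos_pos_of_mem_Ioo
  have h2 := Complex.neg_pi_lt_arg u
  have h3 := lt_of_le_of_ne (Complex.arg_le_pi u) (slitPlane_arg_ne_pi hu)
  constructor <;> linarith

lemma sqrt_sq {u : ℂ} (hu : u ∈ slitPlane) : Complex.exp (Complex.log u / 2) ^ 2 = u := by
  rw [← Complex.exp_nat_mul]
  push_cast
  rw [mul_div_cancel₀ _ two_ne_zero, Complex.exp_log (slitPlane_ne_zero hu)]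

lemma add_one_ne_zero_of_re_pos {q : ℂ} (hq : 0 < q.re) : q + 1 ≠ 0 := by
  intro h
  have := congrArg Complex.re h
  simp at this
  linarith

lemma koebeInv_analyticAt {w : ℂ} (hw : 1 + 4 * w ∈ slitPlane) : AnalyticAt ℂ koebeInv w := by
  have h1 : AnalyticAt ℂ (fun w : ℂ => Complex.exp (Complex.log (1 + 4 * w) / 2)) w := by
    have : AnalyticAt ℂ (fun w : ℂ => Complex.log (1 + 4 * w)) w :=
      AnalyticAt.clog (by fun_prop) hw
    exact (this.div analyticAt_const two_ne_zero).cexp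
  exact (h1.sub analyticAt_const).div (h1.add analyticAt_const)
    (add_one_ne_zero_of_re_pos (sqrt_re_pos hw))

lemma koebeInv_mem {w : ℂ} (hw : 1 + 4 * w ∈ slitPlane) : koebeInv w ∈ ball (0 : ℂ) 1 := by
  have h := sqrt_re_pos hw
  have hne := add_one_ne_zero_of_re_pos h
  rw [mem_ball_zero_iff, koebeInv, norm_div, div_lt_one (norm_pos_iff.2 hne),
    ← sq_lt_sq₀ (norm_nonneg _) (norm_nonneg _), ← Complex.normSq_eq_norm_sq,
    ← Complex.normSq_eq_norm_sq, Complex.normSq_apply, Complex.normSq_apply]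
  simp
  nlinarith

lemma koebe_koebeInv {w : ℂ} (hw : 1 + 4 * w ∈ slitPlane) : koebe (koebeInv w) = w := by
  have h := sqrt_re_pos hw
  have hsq := sqrt_sq hw
  have hne := add_one_ne_zero_of_re_pos h
  rw [koebe, koebeInv]
  set q := Complex.exp (Complex.log (1 + 4 * w) / 2)
  have h1 : 1 - (q - 1) / (q + 1) = 2 / (q + 1) := by
    field_simp
    ring
  rw [h1]
  field_simp
  linear_combination hsq

lemma koebe_omits {z : ℂ} (hz : z ∈ ball (0 : ℂ) 1) {R : ℝ} (hR : 1 / 4 ≤ R) :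
    koebe z ≠ -(R : ℂ) := by
  intro h
  have h1 := one_sub_ne_zero hz
  set v := (1 + z) / (1 - z) with hv
  have h2 : v ^ 2 = ((1 - 4 * R : ℝ) : ℂ) := by
    have h3 : v ^ 2 = 1 + 4 * koebe z := by
      rw [hv, koebe]
      field_simp
      ring
    rw [h3, h]
    push_cast
    ring
  have h3 : 0 < v.re := by
    have hz1 : Complex.normSq z < 1 := by
      rw [Complex.normSq_eq_norm_sq]
      have := mem_ball_zero_iff.1 hz
      nlinarith [norm_nonneg z]
    rw [Complex.normSq_apply] at hz1
    rw [hv, Complex.div_re, ← add_div]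
    apply div_pos _ (Complex.normSq_pos.2 h1)
    simp
    nlinarith
  have him := congrArg Complex.im h2
  have hre := congrArg Complex.re h2
  rw [sq, Complex.mul_im, Complex.ofReal_im] at him
  rw [sq, Complex.mul_re, Complex.ofReal_re] at hre
  have h4 : v.im = 0 := by
    have : v.re * v.im = 0 := by linarith
    exact (mul_eq_zero.1 this).resolve_left h3.ne'
  rw [h4] at hre
  nlinarith

lemma exp_mem_slitPlane_of_abs_im_lt {ζ : ℂ} (h : |ζ.im| < π) :
    1 + 4 * Complex.exp ζ ∈ slitPlane := by
  have h1 := abs_lt.1 h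
  by_contra hcon
  rw [mem_slitPlane_iff] at hcon
  push Not at hcon
  obtain ⟨h2, h3⟩ := hcon
  simp [Complex.exp_re, Complex.exp_im] at h2 h3
  rw [Real.sin_eq_zero_iff_of_lt_of_lt h1.1 h1.2] at h3
  rw [h3, Real.cos_zero, mul_one] at h2
  linarith [Real.exp_pos ζ.re]

lemma green_koebe_mean {ζ₀ : ℂ} {r : ℝ} (hr : 0 < r) (h : |ζ₀.im| + r < π) :
    circleAverage (green koebe) ζ₀ r = green koebe ζ₀ := by
  have hslit : ∀ ζ ∈ closedBall ζ₀ r, 1 + 4 * Complex.exp ζ ∈ slitPlane := by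
    intro ζ hζ
    apply exp_mem_slitPlane_of_abs_im_lt
    have h1 : |ζ.im - ζ₀.im| ≤ r := by
      rw [mem_closedBall, dist_eq_norm] at hζ
      exact (Complex.abs_im_le_norm (ζ - ζ₀)).trans hζ
    have h2 : |ζ.im| ≤ |ζ.im - ζ₀.im| + |ζ₀.im| := by
      simpa using abs_add_le (ζ.im - ζ₀.im) ζ₀.im
    linarith
  have hval : ∀ ζ ∈ closedBall ζ₀ r,
      green koebe ζ = -Real.log ‖koebeInv (Complex.exp ζ)‖ := fun ζ hζ =>
    green_eq koebe_mem (koebeInv_mem (hslit ζ hζ)) (koebe_koebeInv (hslit ζ hζ))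
  have hmean := AnalyticOnNhd.circleAverage_log_norm_of_ne_zero (R := r) (c := ζ₀)
    (g := fun ζ => koebeInv (Complex.exp ζ))
    (by
      rw [abs_of_pos hr]
      intro ζ hζ
      exact (koebeInv_analyticAt (hslit ζ hζ)).comp (by fun_prop : AnalyticAt ℂ Complex.exp ζ))
    (by
      rw [abs_of_pos hr]
      intro ζ hζ h0
      have := koebe_koebeInv (hslit ζ hζ)
      rw [h0] at this
      simp [koebe] at this
      exact Complex.exp_ne_zero ζ this.symm)
  rw [hval ζ₀ (mem_closedBall_self hr.le), ← hmean, ← neg_one_mul, ← smul_eq_mul,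
    ← circleAverage_fun_smul]
  apply circleAverage_congr_sphere
  intro ζ hζ
  rw [abs_of_pos hr] at hζ
  simp [hval ζ (sphere_subset_closedBall hζ)]

lemma green_koebe_eq_zero {ζ : ℂ} {R : ℝ} (hR : 1 / 4 ≤ R) (h : Complex.exp ζ = -(R : ℂ)) :
    green koebe ζ = 0 :=
  green_eq_zero fun _ hz he => koebe_omits hz hR (he.trans h)

/-- A function of the class whose image omits a whole ray from distance `1/4` on is subordinate
to a rotated Koebe function, hence equal to it by Schwarz's lemma. -/
lemma isKoebeRotation_of_omits {f : ℂ → ℂ} (hf : InClassS f) (φ : ℝ)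
    (h : ∀ z ∈ ball (0 : ℂ) 1, ∀ R : ℝ, 1 / 4 ≤ R → f z ≠ -(R * Complex.exp (φ * I))) :
    IsKoebeRotation f := by
  set u := Complex.exp (((-φ : ℝ) : ℂ) * I) with hu
  have hu' : u * Complex.exp (φ * I) = 1 := by
    rw [hu, ← Complex.exp_add]
    simp
  have hu1 : ‖u‖ = 1 := Complex.norm_exp_ofReal_mul_I _
  have hu0 : u ≠ 0 := Complex.exp_ne_zero _
  have hslit : ∀ z ∈ ball (0 : ℂ) 1, 1 + 4 * (u * f z) ∈ slitPlane := by
    intro z hz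
    by_contra hcon
    rw [mem_slitPlane_iff] at hcon
    push Not at hcon
    obtain ⟨h1, h2⟩ := hcon
    simp only [add_re, one_re, add_im, one_im, zero_add] at h1 h2
    have e1 : (4 * (u * f z)).re = 4 * (u * f z).re := by
      rw [show (4 : ℂ) = ((4 : ℝ) : ℂ) by norm_num, Complex.re_ofReal_mul]
    have e2 : (4 * (u * f z)).im = 4 * (u * f z).im := by
      rw [show (4 : ℂ) = ((4 : ℝ) : ℂ) by norm_num, Complex.im_ofReal_mul]
    rw [e1] at h1
    rw [e2] at h2
    apply h z hz (-(u * f z).re) (by linarith)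
    have h3 : u * f z = ((u * f z).re : ℂ) := by
      apply Complex.ext
      · simp
      · rw [Complex.ofReal_im]
        linarith
    push_cast
    rw [← h3]
    linear_combination (-f z) * hu'
  set F : ℂ → ℂ := fun z => koebeInv (u * f z) with hF
  have hFa : ∀ z ∈ ball (0 : ℂ) 1, AnalyticAt ℂ F z := fun z hz =>
    AnalyticAt.comp (g := koebeInv) (f := fun z => u * f z) (koebeInv_analyticAt (hslit z hz))
      (analyticAt_const.mul (hf.1 z hz))
  have h0 : (0 : ℂ) ∈ ball (0 : ℂ) 1 := by simp
  have hF0 : F 0 = 0 := by simp [hF, hf.2.2.1, koebeInv]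
  have hkF : ∀ z ∈ ball (0 : ℂ) 1, koebe (F z) = u * f z := fun z hz => koebe_koebeInv (hslit z hz)
  have hder : deriv F 0 = u := by
    have hk : HasDerivAt koebe 1 (F 0) := by
      have := (koebe_mem.1 0 h0).differentiableAt.hasDerivAt
      rwa [koebe_mem.2.2.2, ← hF0] at this
    have h1 := hk.comp 0 (hFa 0 h0).differentiableAt.hasDerivAt
    have h2 : HasDerivAt (fun z => u * f z) u 0 := by
      have := (hf.1 0 h0).differentiableAt.hasDerivAt.const_mul u
      rwa [hf.2.2.2, mul_one] at this
    have h3 : (koebe ∘ F) =ᶠ[𝓝 0] fun z => u * f z := by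
      filter_upwards [isOpen_ball.mem_nhds h0] with z hz using hkF z hz
    have := h1.unique (h2.congr_of_eventuallyEq h3)
    rwa [one_mul] at this
  have hS := Complex.affine_of_mapsTo_ball_of_norm_dslope_eq_div (f := F) (c := 0) (R₁ := 1)
    (R₂ := 1) (z₀ := 0) (fun z hz => (hFa z hz).differentiableAt.differentiableWithinAt)
    (by
      intro z hz
      rw [hF0]
      exact ball_subset_closedBall (koebeInv_mem (hslit z hz))) h0
    (by rw [dslope_same, hder, hu1]; norm_num)
  refine ⟨-φ, fun z hz => ?_⟩
  have h1 := hS hz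
  simp only [hF0, dslope_same, hder, sub_zero, zero_add, smul_eq_mul] at h1
  have h2 := hkF z hz
  rw [h1, koebe] at h2
  rw [← hu]
  apply mul_left_cancel₀ hu0
  rw [← h2]
  ring

/-! ### Segment integrals and the sub-mean value property -/

lemma integral_comp_neg_of_periodic {g : ℝ → ℝ} (hg : Function.Periodic g (2 * π)) :
    ∫ α in 0..2 * π, g (-α) = ∫ α in 0..2 * π, g α := by
  rw [intervalIntegral.integral_comp_neg]
  have := hg.intervalIntegral_add_eq (-(2 * π)) 0
  simpa using this

lemma circleMap_periodic (z : ℂ) (r : ℝ) : Function.Periodic (circleMap z r) (2 * π) :=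
  periodic_circleMap z r

/-- Integrals over centred vertical segments are continuous in midpoint and length. -/
lemma continuous_segment_integral {X : Type*} [TopologicalSpace X] {g : X → ℝ → ℝ}
    (hg : Continuous (Function.uncurry g)) {y : X → ℝ} (hy : Continuous y) :
    Continuous fun p => ∫ s in (-y p)..(y p), g p s := by
  have h : ∀ p, ∫ s in (-y p)..(y p), g p s = y p * ∫ u in (-1 : ℝ)..1, g p (y p * u) := by
    intro p
    rw [intervalIntegral.mul_integral_comp_mul_left]
    simp
  simp_rw [h]
  apply hy.mul
  apply intervalIntegral.continuous_parametric_intervalIntegral_of_continuous'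
  exact hg.comp (by fun_prop : Continuous fun q : X × ℝ => (q.1, y q.1 * q.2))

lemma re_add_mul_I (x s : ℝ) : ((x : ℂ) + s * I).re = x := by simp

lemma im_add_mul_I (x s : ℝ) : ((x : ℂ) + s * I).im = s := by simp

/-- Averaging over the reflected pair `y ± t` turns a variation of the length of a segment into a
translation of it; hence segment integrals inherit the sub-mean value property. -/
lemma segment_submean {d : ℂ → ℝ} (hd : Continuous d) {z : ℂ} (hz : 0 ≤ z.im) {r : ℝ}
    (hsub : ∀ s ∈ Icc (-z.im) z.im, d (z.re + s * I) ≤ circleAverage d (z.re + s * I) r) :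
    ∫ s in (-z.im)..z.im, d (z.re + s * I) ≤
      circleAverage (fun w : ℂ => ∫ s in (-w.im)..w.im, d (w.re + s * I)) z r := by
  set K : ℝ → ℝ := fun α => ∫ s in (-(circleMap z r α).im)..(circleMap z r α).im,
    d ((circleMap z r α).re + s * I) with hK
  set J : ℝ → ℝ := fun α => ∫ s in (-z.im)..z.im, d (circleMap (z.re + s * I) r α) with hJ
  have hKper : Function.Periodic K (2 * π) := fun α => by
    simp only [hK, circleMap_periodic z r α]
  have hJper : Function.Periodic J (2 * π) := fun α => by
    simp only [hJ, circleMap_periodic _ r α]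
  have hKc : Continuous K := by
    apply continuous_segment_integral (g := fun α s => d ((circleMap z r α).re + s * I))
    · apply hd.comp
      have := continuous_circleMap z r
      fun_prop
    · exact Complex.continuous_im.comp (continuous_circleMap z r)
  have hJc2 : Continuous (Function.uncurry fun α s : ℝ => d (circleMap (z.re + s * I) r α)) := by
    apply hd.comp
    unfold circleMap
    fun_prop
  have hJc : Continuous J :=
    intervalIntegral.continuous_parametric_intervalIntegral_of_continuous' hJc2 _ _
  have hre : ∀ (w : ℂ) α, (circleMap w r α).re = w.re + r * Real.cos α := fun w α => by
    simp [circleMap, Complex.exp_ofReal_mul_I_re]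
  have him : ∀ (w : ℂ) α, (circleMap w r α).im = w.im + r * Real.sin α := fun w α => by
    simp [circleMap, Complex.exp_ofReal_mul_I_im]
  have hpair : ∀ α, K α + K (-α) = J α + J (-α) := by
    intro α
    set a := z.re + r * Real.cos α
    set t := r * Real.sin α
    set y := z.im
    set g : ℝ → ℝ := fun s => d (a + s * I) with hg
    have hgc : Continuous g := hd.comp (by fun_prop)
    have hgi : ∀ p q : ℝ, IntervalIntegrable g volume p q := fun p q => hgc.intervalIntegrable p q
    have e1 : K α = ∫ s in (-(y + t))..(y + t), g s := by
      simp only [hK, hre, him]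
      rfl
    have e2 : K (-α) = ∫ s in (-(y - t))..(y - t), g s := by
      simp only [hK, hre, him, Real.cos_neg, Real.sin_neg, mul_neg, ← sub_eq_add_neg]
      rfl
    have e3 : J α = ∫ s in (-y + t)..(y + t), g s := by
      rw [← intervalIntegral.integral_comp_add_right (f := g)]
      simp only [hJ]
      apply intervalIntegral.integral_congr
      intro s _
      simp only [hg]
      congr 1
      apply Complex.ext
      · rw [hre, re_add_mul_I, re_add_mul_I]
      · rw [him, im_add_mul_I, im_add_mul_I]
    have e4 : J (-α) = ∫ s in (-y - t)..(y - t), g s := by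
      rw [← intervalIntegral.integral_comp_sub_right (f := g)]
      simp only [hJ]
      apply intervalIntegral.integral_congr
      intro s _
      simp only [hg]
      congr 1
      apply Complex.ext
      · rw [hre, re_add_mul_I, re_add_mul_I, Real.cos_neg]
      · rw [him, im_add_mul_I, im_add_mul_I, Real.sin_neg, mul_neg, ← sub_eq_add_neg]
    rw [e1, e2, e3, e4, show -(y + t) = -y - t by ring, show -(y - t) = -y + t by ring,
      ← intervalIntegral.integral_add_adjacent_intervals (hgi (-y - t) (-y + t)) (hgi _ _),
      ← intervalIntegral.integral_add_adjacent_intervals (hgi (-y + t) (y + t)) (hgi _ (y - t)),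
      ← intervalIntegral.integral_add_adjacent_intervals (hgi (-y - t) (-y + t)) (hgi _ (y - t)),
      ← intervalIntegral.integral_add_adjacent_intervals (hgi (-y + t) (y + t)) (hgi _ (y - t))]
    ring
  have hKJ : ∫ α in 0..2 * π, K α = ∫ α in 0..2 * π, J α := by
    have h1 : ∫ α in 0..2 * π, (K α + K (-α)) = ∫ α in 0..2 * π, (J α + J (-α)) := by
      simp_rw [hpair]
    have hKn : Continuous fun α => K (-α) := hKc.comp continuous_neg
    have hJn : Continuous fun α => J (-α) := hJc.comp continuous_neg
    rw [intervalIntegral.integral_add (hKc.intervalIntegrable _ _) (hKn.intervalIntegrable _ _),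
      intervalIntegral.integral_add (hJc.intervalIntegrable _ _) (hJn.intervalIntegrable _ _),
      integral_comp_neg_of_periodic hKper, integral_comp_neg_of_periodic hJper] at h1
    linarith
  rw [circleAverage_def, smul_eq_mul]
  change _ ≤ (2 * π)⁻¹ * ∫ α in 0..2 * π, K α
  rw [hKJ, intervalIntegral_intervalIntegral_swap, ← intervalIntegral.integral_const_mul]
  · apply intervalIntegral.integral_mono_on (by linarith)
      ((hd.comp (by fun_prop)).intervalIntegrable _ _)
    · apply Continuous.intervalIntegrable
      apply continuous_const.mul
      apply intervalIntegral.continuous_parametric_intervalIntegral_of_continuous'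
      exact hJc2.comp continuous_swap
    · intro s hs
      have := hsub s hs
      rwa [circleAverage_def, smul_eq_mul] at this
  · exact (hJc2.continuousOn.integrableOn_compact
      (isCompact_uIcc.prod isCompact_uIcc)).mono_set
      (prod_mono uIoc_subset_uIcc uIoc_subset_uIcc)

/-- The strong maximum principle on a single circle. -/
lemma eq_on_sphere_of_submean {P : ℂ → ℝ} (hP : Continuous P) {z : ℂ} {r M : ℝ} (hr : 0 < r)
    (hsub : P z ≤ circleAverage P z r) (hM : M ≤ P z) (hle : ∀ w ∈ sphere z r, P w ≤ M) :
    ∀ w ∈ sphere z r, P w = M := by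
  intro w hw
  by_contra hne
  have hlt : P w < M := lt_of_le_of_ne (hle w hw) hne
  have hc : Continuous fun α => M - P (circleMap z r α) :=
    continuous_const.sub (hP.comp (continuous_circleMap z r))
  have himg : w ∈ circleMap z r '' Ioc 0 (2 * π) := by
    rw [image_circleMap_Ioc, abs_of_pos hr]
    exact hw
  obtain ⟨α, hα, rfl⟩ := himg
  have hpos := intervalIntegral.integral_pos two_pi_pos hc.continuousOn
    (fun α _ => sub_nonneg.2 (hle _ (circleMap_mem_sphere z hr.le α)))
    ⟨α, Ioc_subset_Icc_self hα, sub_pos.2 hlt⟩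
  have hPc : Continuous fun α => P (circleMap z r α) := hP.comp (continuous_circleMap z r)
  rw [intervalIntegral.integral_sub intervalIntegrable_const
    (hPc.intervalIntegrable _ _)] at hpos
  rw [circleAverage_def, smul_eq_mul, le_inv_mul_iff₀ two_pi_pos] at hsub
  simp at hpos
  nlinarith [two_pi_pos, mul_le_mul_of_nonneg_left hM two_pi_pos.le]

/-! ### The comparison function and its maximum principle -/

/-- The comparison function: the integral of `green f - green koebe` over the vertical segment
`z.re + [-z.im, z.im] I`, where `green f` is first translated vertically by `φ`. -/
noncomputable def Q (f : ℂ → ℂ) (φ : ℝ) (z : ℂ) : ℝ :=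
  ∫ s in (-z.im)..z.im, (green f (z.re + s * I + φ * I) - green koebe (z.re + s * I))

lemma continuous_Q {f : ℂ → ℂ} (hf : InClassS f) : Continuous fun p : ℝ × ℂ => Q f p.1 p.2 := by
  have h1 := continuous_green hf
  have h2 := continuous_green koebe_mem
  apply continuous_segment_integral (y := fun p : ℝ × ℂ => p.2.im)
    (g := fun (p : ℝ × ℂ) (s : ℝ) =>
      green f (p.2.re + s * I + p.1 * I) - green koebe (p.2.re + s * I))
  · exact (h1.comp (by fun_prop)).sub (h2.comp (by fun_prop))
  · fun_prop

lemma continuous_Q_right {f : ℂ → ℂ} (hf : InClassS f) (φ : ℝ) : Continuous (Q f φ) :=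
  (continuous_Q hf).comp (by fun_prop : Continuous fun z : ℂ => (φ, z))

lemma circleAverage_comp_add (u : ℂ → ℝ) (c z : ℂ) (r : ℝ) :
    circleAverage (fun ζ => u (ζ + c)) z r = circleAverage u (z + c) r := by
  rw [circleAverage_def, circleAverage_def]
  have : ∀ θ, circleMap z r θ + c = circleMap (z + c) r θ := fun θ => by
    simp [circleMap]; ring
  simp_rw [this]

lemma Q_submean {f : ℂ → ℂ} (hf : InClassS f) (φ : ℝ) {z : ℂ} {r : ℝ} (hr : 0 < r)
    (hz : 0 ≤ z.im) (hzr : z.im + r < π) : Q f φ z ≤ circleAverage (Q f φ) z r := by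
  have h1 : Continuous fun ζ : ℂ => green f (ζ + φ * I) :=
    (continuous_green hf).comp (by fun_prop)
  have h2 := continuous_green koebe_mem
  apply segment_submean (d := fun ζ => green f (ζ + φ * I) - green koebe ζ) (h1.sub h2) hz
  intro s hs
  rw [circleAverage_fun_sub (h1.continuousOn.circleIntegrable hr.le)
    (h2.continuousOn.circleIntegrable hr.le), circleAverage_comp_add (green f),
    green_koebe_mean hr]
  · linarith [green_submean hf (z.re + s * I + φ * I) hr]
  · rw [im_add_mul_I]
    have := abs_le.2 hs
    linarith

lemma Q_top {f : ℂ → ℂ} (hf : InClassS f) (φ x : ℝ) :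
    Q f φ (x + π * I) = greenMean f x - greenMean koebe x := by
  have h1 : Continuous fun s : ℝ => green f (x + s * I + φ * I) :=
    (continuous_green hf).comp (by fun_prop)
  have h2 : Continuous fun s : ℝ => green koebe (x + s * I) :=
    (continuous_green koebe_mem).comp (by fun_prop)
  rw [Q, re_add_mul_I, im_add_mul_I, intervalIntegral.integral_sub (h1.intervalIntegrable _ _)
    (h2.intervalIntegrable _ _), greenMean_eq f x (-π + φ), greenMean_eq koebe x (-π)]
  have e : ∫ s in (-π)..π, green f (x + s * I + φ * I) =
      ∫ s in (-π)..π, (fun s : ℝ => green f (x + s * I)) (s + φ) := by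
    congr 1
    ext s
    simp only []
    congr 1
    push_cast
    ring
  rw [e, intervalIntegral.integral_comp_add_right (fun s : ℝ => green f (x + s * I)),
    show -π + φ + 2 * π = π + φ by ring, show -π + 2 * π = π by ring]

lemma Q_bottom (f : ℂ → ℂ) (φ x : ℝ) : Q f φ x = 0 := by
  simp [Q]

/-- Near the top edge `im = π`, and for the translation that puts a zero of `green f` at both ends of
the segment, shortening the segment by `δ` at each end costs at most `ε δ`. -/
lemma Q_top_sub_le {f : ℂ → ℂ} (hf : InClassS f) {x ψ : ℝ} (hψ : green f (x + ψ * I) = 0)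
    {ε : ℝ} (hε : 0 < ε) : ∃ δ₀ > 0, ∀ δ, 0 ≤ δ → δ ≤ δ₀ →
      Q f (ψ - π) (x + π * I) - Q f (ψ - π) (x + (π - δ : ℝ) * I) ≤ ε * δ := by
  have hc : Continuous fun s : ℝ => green f (x + s * I) :=
    (continuous_green hf).comp (by fun_prop)
  have hev : ∀ᶠ s : ℝ in 𝓝 ψ, green f (x + s * I) < ε / 2 := by
    apply hc.continuousAt.eventually_lt_const
    simp only [hψ]
    positivity
  obtain ⟨δ₀, hδ₀, hball⟩ := Metric.eventually_nhds_iff.1 hev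
  refine ⟨δ₀ / 2, by positivity, fun δ h0 h1 => ?_⟩
  set d : ℝ → ℝ := fun s =>
    green f (x + s * I + (ψ - π : ℝ) * I) - green koebe (x + s * I) with hd
  have hdc : Continuous d :=
    ((continuous_green hf).comp (by fun_prop)).sub ((continuous_green koebe_mem).comp (by fun_prop))
  have hdi : ∀ p q : ℝ, IntervalIntegrable d volume p q := fun p q => hdc.intervalIntegrable p q
  have hQ : ∀ y : ℝ, Q f (ψ - π) (x + y * I) = ∫ s in (-y)..y, d s := fun y => by
    rw [Q, re_add_mul_I, im_add_mul_I]
  have hle1 : ∀ s : ℝ, |s - π| < δ₀ → d s ≤ ε / 2 := fun s hs => by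
    have h1 := hball (y := s + (ψ - π)) (by rw [Real.dist_eq]; convert hs using 2; ring)
    have h2 := green_nonneg koebe koebe_mem (x + s * I)
    have h3 : (x : ℂ) + s * I + (ψ - π : ℝ) * I = x + (s + (ψ - π) : ℝ) * I := by
      push_cast; ring
    simp only [hd]
    rw [h3]
    linarith
  have hle2 : ∀ s : ℝ, |s + π| < δ₀ → d s ≤ ε / 2 := fun s hs => by
    have h1 := hball (y := s + 2 * π + (ψ - π)) (by rw [Real.dist_eq]; convert hs using 2; ring)
    have h2 := green_nonneg koebe koebe_mem (x + s * I)
    have h3 := green_periodic f x (s + (ψ - π))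
    have h4 : (x : ℂ) + s * I + (ψ - π : ℝ) * I = x + (s + (ψ - π) : ℝ) * I := by
      push_cast; ring
    simp only [hd]
    simp only [] at h3
    rw [h4, ← h3, show s + (ψ - π) + 2 * π = s + 2 * π + (ψ - π) by ring]
    linarith
  rw [hQ, hQ, ← intervalIntegral.integral_add_adjacent_intervals (hdi (-π) (-(π - δ))) (hdi _ π),
    ← intervalIntegral.integral_add_adjacent_intervals (hdi (-(π - δ)) (π - δ)) (hdi _ π)]
  have i1 : ∫ s in (-π)..(-(π - δ)), d s ≤ ∫ _ in (-π)..(-(π - δ)), ε / 2 := by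
    apply intervalIntegral.integral_mono_on (by linarith) (hdi _ _) intervalIntegrable_const
    intro s hs
    apply hle2
    rw [abs_lt]
    constructor <;> linarith [hs.1, hs.2]
  have i2 : ∫ s in (π - δ)..π, d s ≤ ∫ _ in (π - δ)..π, ε / 2 := by
    apply intervalIntegral.integral_mono_on (by linarith) (hdi _ _) intervalIntegrable_const
    intro s hs
    apply hle1
    rw [abs_lt]
    constructor <;> linarith [hs.1, hs.2]
  simp only [intervalIntegral.integral_const, smul_eq_mul] at i1 i2
  nlinarith

/-- The maximum principle for `Q` on rectangles reaching up to the line `im = π`. On the top edge no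
bound on `Q` is needed at the points above which `green f` vanishes: there the comparison function
`b` increases towards the edge faster than a suitable translate of `Q` does. -/
lemma Q_le_of_boundary {f : ℂ → ℂ} (hf : InClassS f) {x₁ x₂ y₁ c : ℝ} (hy₁ : 0 ≤ y₁)
    (hy₁' : y₁ < π) (hc : 0 < c) {b : ℂ → ℝ} (hb : Continuous b)
    (hmean : ∀ z r, 0 < r → circleAverage b z r = b z)
    (hbtop : ∀ x ∈ Icc x₁ x₂, ∀ δ, 0 ≤ δ → δ ≤ π - y₁ →
      c * δ ≤ b (x + π * I) - b (x + (π - δ : ℝ) * I))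
    (hleft : ∀ φ ∈ Icc (-(2 * π)) 0, ∀ y ∈ Icc y₁ π, Q f φ (x₁ + y * I) ≤ b (x₁ + y * I))
    (hright : ∀ φ ∈ Icc (-(2 * π)) 0, ∀ y ∈ Icc y₁ π, Q f φ (x₂ + y * I) ≤ b (x₂ + y * I))
    (hbot : ∀ φ ∈ Icc (-(2 * π)) 0, ∀ x ∈ Icc x₁ x₂, Q f φ (x + y₁ * I) ≤ b (x + y₁ * I))
    (htop : ∀ x ∈ Icc x₁ x₂, Q f 0 (x + π * I) ≤ b (x + π * I) ∨
      ∃ ψ ∈ Icc (-π) π, green f (x + ψ * I) = 0) :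
    ∀ φ ∈ Icc (-(2 * π)) 0, ∀ x ∈ Icc x₁ x₂, ∀ y ∈ Icc y₁ π,
      Q f φ (x + y * I) ≤ b (x + y * I) := by
  intro φ₀ hφ₀ x₀ hx₀ y₀ hy₀
  by_contra! hcon
  set S : Set (ℝ × ℝ × ℝ) := Icc (-(2 * π)) 0 ×ˢ Icc x₁ x₂ ×ˢ Icc y₁ π with hS
  set D : ℝ × ℝ × ℝ → ℝ := fun p => Q f p.1 (p.2.1 + p.2.2 * I) - b (p.2.1 + p.2.2 * I) with hD
  have hScomp : IsCompact S := isCompact_Icc.prod (isCompact_Icc.prod isCompact_Icc)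
  have hDc : Continuous D :=
    ((continuous_Q hf).comp (by fun_prop : Continuous fun p : ℝ × ℝ × ℝ =>
      (p.1, (p.2.1 : ℂ) + p.2.2 * I))).sub (hb.comp (by fun_prop))
  obtain ⟨p, hpS, hpmax⟩ := hScomp.exists_isMaxOn ⟨(φ₀, x₀, y₀), hφ₀, hx₀, hy₀⟩ hDc.continuousOn
  set M := D p with hM
  have hMpos : 0 < M := by
    have := hpmax (a := (φ₀, x₀, y₀)) ⟨hφ₀, hx₀, hy₀⟩
    simp only [mem_ofPred_eq, hD] at this
    simp only [hM, hD]
    linarith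
  -- Among the maximum points of `Q - b` over all translations, take one of least height.
  have hTcomp : IsCompact (S ∩ D ⁻¹' {M}) :=
    hScomp.inter_right (isClosed_singleton.preimage hDc)
  obtain ⟨⟨φ, x, y⟩, hqT, hqmin⟩ := hTcomp.exists_isMinOn ⟨p, hpS, rfl⟩
    (f := fun p : ℝ × ℝ × ℝ => p.2.2) (by fun_prop)
  obtain ⟨⟨hφ, hx, hy⟩, hDq⟩ := hqT
  simp only [] at hφ hx hy
  have hDq' : Q f φ (x + y * I) - b (x + y * I) = M := hDq
  have hx1 : x ≠ x₁ := by
    rintro rfl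
    linarith [hleft φ hφ y hy]
  have hx2 : x ≠ x₂ := by
    rintro rfl
    linarith [hright φ hφ y hy]
  have hy1 : y ≠ y₁ := by
    rintro rfl
    linarith [hbot φ hφ x hx]
  have hx1' := lt_of_le_of_ne hx.1 (Ne.symm hx1)
  have hx2' := lt_of_le_of_ne hx.2 hx2
  have hy1' := lt_of_le_of_ne hy.1 (Ne.symm hy1)
  -- On the top edge `Q` does not depend on the translation. If `green f` vanishes at `x + ψ I`, the
  -- translate by `ψ - π` makes `Q - b` exceed `M` slightly below the edge. In the interior the maximum
  -- propagates to the lowest point of a small circle, against the minimality of the height.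
  rcases eq_or_lt_of_le hy.2 with rfl | hyπ
  · rcases htop x hx with h | ⟨ψ, hψ, hψ0⟩
    · rw [Q_top hf] at h hDq'
      linarith
    · obtain ⟨δ₀, hδ₀, hδ⟩ := Q_top_sub_le hf hψ0 (ε := c / 2) (by positivity)
      set δ := min δ₀ (π - y₁)
      have hδpos : 0 < δ := lt_min hδ₀ (by linarith)
      have h1 := hδ δ hδpos.le (min_le_left _ _)
      have h2 := hbtop x hx δ hδpos.le (min_le_right _ _)
      have hδ2 : δ ≤ π - y₁ := min_le_right _ _
      have h3 := hpmax (a := (ψ - π, x, π - δ))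
        ⟨⟨by linarith [hψ.1], by linarith [hψ.2]⟩, hx, ⟨by linarith, by linarith⟩⟩
      simp only [mem_ofPred_eq] at h3
      change Q f (ψ - π) (x + (π - δ : ℝ) * I) - b (x + (π - δ : ℝ) * I) ≤ M at h3
      rw [Q_top hf] at h1 hDq'
      nlinarith
  · set r := min (min ((x - x₁)) ((x₂ - x))) (min ((y - y₁)) ((π - y))) / 2 with hr
    have hm : 0 < min (min ((x - x₁)) ((x₂ - x))) (min ((y - y₁)) ((π - y))) := by
      simp only [lt_min_iff]
      refine ⟨⟨?_, ?_⟩, ?_, ?_⟩ <;> linarith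
    have hrpos : 0 < r := by positivity
    have hr1 : r < x - x₁ := (half_lt_self hm).trans_le ((min_le_left _ _).trans (min_le_left _ _))
    have hr2 : r < x₂ - x := (half_lt_self hm).trans_le ((min_le_left _ _).trans (min_le_right _ _))
    have hr3 : r < y - y₁ := (half_lt_self hm).trans_le ((min_le_right _ _).trans (min_le_left _ _))
    have hr4 : r < π - y :=
      (half_lt_self hm).trans_le ((min_le_right _ _).trans (min_le_right _ _))
    have hPc : Continuous fun z => Q f φ z - b z := (continuous_Q_right hf φ).sub hb
    have hmem : ∀ w ∈ sphere ((x : ℂ) + y * I) r, w.re ∈ Icc x₁ x₂ ∧ w.im ∈ Icc y₁ π := by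
      intro w hw
      rw [mem_sphere_iff_norm] at hw
      have a1 := (Complex.abs_re_le_norm (w - (x + y * I))).trans hw.le
      have a2 := (Complex.abs_im_le_norm (w - (x + y * I))).trans hw.le
      rw [Complex.sub_re, re_add_mul_I, abs_le] at a1
      rw [Complex.sub_im, im_add_mul_I, abs_le] at a2
      refine ⟨⟨?_, ?_⟩, ?_, ?_⟩ <;> linarith [a1.1, a1.2, a2.1, a2.2]
    have hsph := eq_on_sphere_of_submean hPc (z := x + y * I) (M := M) hrpos ?_ hDq'.ge ?_
      (x + (y - r : ℝ) * I) ?_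
    · have hmem' := hmem (x + (y - r : ℝ) * I) ?_
      · rw [re_add_mul_I, im_add_mul_I] at hmem'
        have h5 := hqmin (a := (φ, x, y - r)) ⟨⟨hφ, hmem'⟩, hsph⟩
        simp only [mem_ofPred_eq] at h5
        linarith
      · rw [mem_sphere_iff_norm]
        push_cast
        ring_nf
        simp [abs_of_pos hrpos]
    · rw [circleAverage_fun_sub ((continuous_Q_right hf φ).continuousOn.circleIntegrable hrpos.le)
        (hb.continuousOn.circleIntegrable hrpos.le), hmean _ _ hrpos]
      have := Q_submean hf φ (z := x + y * I) hrpos (by rw [im_add_mul_I]; linarith)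
        (by rw [im_add_mul_I]; linarith)
      linarith
    · intro w hw
      obtain ⟨h1, h2⟩ := hmem w hw
      have := hpmax (a := (φ, w.re, w.im)) ⟨hφ, h1, h2⟩
      simp only [mem_ofPred_eq, hD, Complex.re_add_im] at this
      exact this
    · rw [mem_sphere_iff_norm]
      push_cast
      ring_nf
      simp [abs_of_pos hrpos]

/-! ### Comparison of circular means, and equality -/

lemma circleAverage_re_comp {g : ℂ → ℂ} (hg : Differentiable ℂ g) (z : ℂ) (r : ℝ) :
    circleAverage (fun z => (g z).re) z r = (g z).re := by
  apply InnerProductSpace.HarmonicOnNhd.circleAverage_eq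
  intro w _
  exact (hg.analyticAt w).harmonicAt_re

lemma exists_of_green_ne_zero {f : ℂ → ℂ} {ζ : ℂ} (h : green f ζ ≠ 0) :
    ∃ z ∈ ball (0 : ℂ) 1, f z = Complex.exp ζ := by
  by_contra! hcon
  exact h (green_eq_zero hcon)

lemma ne_exp_of_green_eq_zero {f : ℂ → ℂ} (hf : InClassS f) {ζ : ℂ} (h : green f ζ = 0)
    {z : ℂ} (hz : z ∈ ball (0 : ℂ) 1) : f z ≠ Complex.exp ζ := by
  intro heq
  rw [green_eq hf hz heq] at h
  have h0 := norm_pos_iff.2 (ne_zero_of_eq_exp hf heq)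
  linarith [Real.log_neg h0 (mem_ball_zero_iff.1 hz)]

/-- If `green f` has no zero over the circle of radius `exp x`, that circle and its inside lie in
the image of `f`. -/
lemma closedBall_subset_of_green_ne_zero {f : ℂ → ℂ} (hf : InClassS f) {x : ℝ}
    (h : ∀ ψ ∈ Icc (-π) π, green f (x + ψ * I) ≠ 0) :
    closedBall (0 : ℂ) (Real.exp x) ⊆ f '' ball 0 1 := by
  apply closedBall_subset_image hf (Real.exp_pos x)
  intro w hw
  have hw' : ‖w‖ = Real.exp x := by simpa using hw
  have hw0 : w ≠ 0 := by
    rw [← norm_pos_iff, hw']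
    exact Real.exp_pos x
  obtain ⟨z, hz, hfz⟩ := exists_of_green_ne_zero
    (h w.arg ⟨(Complex.neg_pi_lt_arg w).le, Complex.arg_le_pi w⟩)
  refine ⟨z, hz, ?_⟩
  rw [hfz, Complex.exp_add, ← Complex.ofReal_exp, ← hw', Complex.norm_mul_exp_arg_mul_I]

/-- On the top edge `Q` is nonpositive, unless the circle contains a point omitted by `f`. -/
lemma Q_top_cases {f : ℂ → ℂ} (hf : InClassS f) (x : ℝ) :
    Q f 0 (x + π * I) ≤ 0 ∨ ∃ ψ ∈ Icc (-π) π, green f (x + ψ * I) = 0 := by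
  by_cases h : ∃ ψ ∈ Icc (-π) π, green f (x + ψ * I) = 0
  · exact Or.inr h
  · left
    push Not at h
    rw [Q_top hf, greenMean_eq_of_subset hf (closedBall_subset_of_green_ne_zero hf h)]
    linarith [neg_le_greenMean koebe_mem x]

lemma Q_le_of_forall_le {f : ℂ → ℂ} (hf : InClassS f) {φ C x y : ℝ} (hy : y ∈ Icc 0 π)
    (hC : 0 ≤ C)
    (h : ∀ s : ℝ, green f (x + s * I + φ * I) - green koebe (x + s * I) ≤ C) :
    Q f φ (x + y * I) ≤ 2 * π * C := by
  rw [Q, re_add_mul_I, im_add_mul_I]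
  have hd : Continuous fun s : ℝ => green f (x + s * I + φ * I) - green koebe (x + s * I) :=
    ((continuous_green hf).comp (by fun_prop)).sub ((continuous_green koebe_mem).comp (by fun_prop))
  have := intervalIntegral.integral_mono_on (μ := volume) (by linarith [hy.1] : -y ≤ y)
    (hd.intervalIntegrable _ _) (intervalIntegrable_const (c := C)) (fun s _ => h s)
  simp only [intervalIntegral.integral_const, smul_eq_mul] at this
  nlinarith [hy.2, hy.1]

/-- The segment integrals of `green f` never exceed those of `green koebe`, whatever the vertical
translation. -/
lemma Q_nonpos {f : ℂ → ℂ} (hf : InClassS f) {φ x y : ℝ} (hφ : φ ∈ Icc (-(2 * π)) 0)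
    (hy : y ∈ Icc 0 π) : Q f φ (x + y * I) ≤ 0 := by
  apply le_of_forall_pos_le_add
  intro ε' hε'
  set ε := ε' / (5 * π) with hε
  have hεpos : 0 < ε := by positivity
  -- The comparison function is `4πε + ε im z`; its slope `ε` is what the top edge requires, and `X`
  -- is so large that `green f - green koebe ≤ 2ε` on both vertical sides.
  obtain ⟨X₁, hX₁⟩ := green_tail hf hεpos
  obtain ⟨X₂, hX₂⟩ := green_pole hf hεpos
  obtain ⟨X₃, hX₃⟩ := green_pole koebe_mem hεpos
  set X := max |x| (max X₁ (max (-X₂) (-X₃))) with hX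
  have hXx : |x| ≤ X := le_max_left _ _
  have hX1 : X₁ ≤ X := (le_max_left _ _).trans (le_max_right _ _)
  have hX2 : -X₂ ≤ X := (le_max_left _ _).trans ((le_max_right _ _).trans (le_max_right _ _))
  have hX3 : -X₃ ≤ X := (le_max_right _ _).trans ((le_max_right _ _).trans (le_max_right _ _))
  have hbc : Continuous fun z : ℂ => 4 * π * ε + ε * z.im := by fun_prop
  have key := Q_le_of_boundary hf (x₁ := -X) (x₂ := X) (y₁ := 0) (c := ε) le_rfl pi_pos hεpos hbc
    ?_ ?_ ?_ ?_ ?_ ?_ φ hφ x (abs_le.1 hXx) y hy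
  · rw [im_add_mul_I] at key
    have h1 : ε' = 5 * π * ε := by rw [hε]; field_simp
    rw [h1]
    nlinarith [hy.2, pi_pos]
  · intro z r hr
    have : (fun z : ℂ => 4 * π * ε + ε * z.im) =
        fun z : ℂ => ((4 * π * ε : ℝ) + (-(ε : ℂ) * I) * z).re := by
      ext z; simp
    rw [this, circleAverage_re_comp (by fun_prop)]
    simp
  · intro x' _ δ h0 h1
    simp only [im_add_mul_I]
    linarith
  · intro φ' _ y' hy'
    have := Q_le_of_forall_le hf (φ := φ') (C := 2 * ε) (x := -X) hy' (by positivity) ?_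
    · simp only [Complex.ofReal_neg] at this ⊢
      refine this.trans ?_
      have : ((-(X : ℂ) + y' * I)).im = y' := by simp
      rw [this]
      nlinarith [hy'.1]
    · intro s
      have h2 := abs_le.1 (hX₂ ((-X : ℝ) + s * I + φ' * I) (by simp; linarith))
      have h3 := abs_le.1 (hX₃ ((-X : ℝ) + s * I) (by simp; linarith))
      simp only [Complex.add_re, Complex.ofReal_re, Complex.re_ofReal_mul, Complex.I_re] at h2 h3
      linarith
  · intro φ' _ y' hy'
    have := Q_le_of_forall_le hf (φ := φ') (C := 2 * ε) (x := X) hy' (by positivity) ?_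
    · refine this.trans ?_
      rw [im_add_mul_I]
      nlinarith [hy'.1]
    · intro s
      have h2 := hX₁ (X + s * I + φ' * I) (by simp; linarith)
      have h3 := green_nonneg koebe koebe_mem (X + s * I)
      linarith
  · intro φ' _ x' _
    have := Q_bottom f φ' x'
    simp only [Complex.ofReal_zero, zero_mul, add_zero, this, Complex.ofReal_im]
    positivity
  · intro x' _
    refine (Q_top_cases hf x').imp_left fun h => h.trans ?_
    rw [im_add_mul_I]
    positivity

/-- The circular means of Green's function are largest for the Koebe function. -/
theorem greenMean_le {f : ℂ → ℂ} (hf : InClassS f) (x : ℝ) :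
    greenMean f x ≤ greenMean koebe x := by
  have := Q_nonpos hf (φ := 0) (x := x) (y := π) ⟨by linarith [two_pi_pos], le_rfl⟩
    ⟨pi_pos.le, le_rfl⟩
  rw [Q_top hf] at this
  linarith

/-- Equality of the circular means at a radius whose disk is not covered by `f` forces the segment
integrals of some translate to touch: this is the Hopf lemma at a top boundary point. -/
lemma exists_Q_eq_zero {f : ℂ → ℂ} (hf : InClassS f) {a : ℂ} (ha : a ∉ f '' ball 0 1) {x₀ : ℝ}
    (hx₀ : ‖a‖ < Real.exp x₀) (heq : greenMean f x₀ = greenMean koebe x₀) :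
    ∃ φ ∈ Icc (-(2 * π)) 0, ∃ z : ℂ, 0 < z.im ∧ z.im < π ∧ Q f φ z = 0 := by
  by_contra! hcon
  have hneg : ∀ φ ∈ Icc (-(2 * π)) 0, ∀ x y : ℝ, 0 < y → y < π → Q f φ (x + y * I) < 0 := by
    intro φ hφ x y h1 h2
    apply lt_of_le_of_ne (Q_nonpos hf hφ ⟨h1.le, h2.le⟩)
    exact hcon φ hφ _ (by rwa [im_add_mul_I]) (by rwa [im_add_mul_I])
  have ha0 : 0 < ‖a‖ := by
    rw [norm_pos_iff]
    rintro rfl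
    exact ha ⟨0, by simp, hf.2.2.1⟩
  have hlog : Real.log ‖a‖ < x₀ := by rwa [Real.log_lt_iff_lt_exp ha0]
  set η := (x₀ - Real.log ‖a‖) / 2 with hη
  have hηpos : 0 < η := by rw [hη]; linarith
  -- Half the width and the height of the rectangle below `x₀ + π I`: over its top edge every circle
  -- meets the complement of the image, and `h + h ≤ η² / 2` makes the barrier below nonnegative on
  -- the vertical sides.
  set h := min 1 (η ^ 2 / 4) with hh
  have hhpos : 0 < h := lt_min one_pos (by positivity)
  have hh1 : h ≤ 1 := min_le_left _ _
  have hh2 : h ≤ η ^ 2 / 4 := min_le_right _ _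
  have hhπ : h < π := by linarith [pi_gt_three]
  obtain ⟨m, hm, hQm⟩ : ∃ m > 0, ∀ φ ∈ Icc (-(2 * π)) 0, ∀ x ∈ Icc (x₀ - η) (x₀ + η),
      Q f φ (x + (π - h : ℝ) * I) ≤ -m := by
    have hc : Continuous fun p : ℝ × ℝ => Q f p.1 (p.2 + (π - h : ℝ) * I) :=
      (continuous_Q hf).comp (by fun_prop :
        Continuous fun p : ℝ × ℝ => (p.1, (p.2 : ℂ) + (π - h : ℝ) * I))
    obtain ⟨p, hp, hmax⟩ := (isCompact_Icc.prod isCompact_Icc : IsCompact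
      (Icc (-(2 * π)) 0 ×ˢ Icc (x₀ - η) (x₀ + η))).exists_isMaxOn
      ⟨(0, x₀), ⟨by linarith [two_pi_pos], le_rfl⟩, by linarith, by linarith⟩ hc.continuousOn
    refine ⟨-Q f p.1 (p.2 + (π - h : ℝ) * I), ?_, fun φ hφ x hx => ?_⟩
    · have := hneg p.1 hp.1 p.2 (π - h) (by linarith) (by linarith)
      linarith
    · have := hmax (a := (φ, x)) ⟨hφ, hx⟩
      simp only [mem_ofPred_eq] at this
      linarith
  set ε := m / η ^ 2 with hε
  have hεpos : 0 < ε := by positivity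
  have hεm : ε * η ^ 2 = m := by rw [hε]; field_simp
  -- A harmonic barrier: negative at `x₀ + π I`, nonnegative on the vertical sides, at least `-m` on
  -- the bottom side, and with slope at least `ε` towards the top edge.
  set b : ℂ → ℝ := fun z =>
    -ε * (η ^ 2 / 2 - (z.re - x₀) ^ 2 + (z.im - π) ^ 2 + (π - z.im)) with hb
  have key := Q_le_of_boundary hf (x₁ := x₀ - η) (x₂ := x₀ + η) (y₁ := π - h) (c := ε) (b := b)
    (by linarith) (by linarith) hεpos (by fun_prop)
    ?_ ?_ ?_ ?_ ?_ ?_ 0 ⟨by linarith [two_pi_pos], le_rfl⟩ x₀ ⟨by linarith, by linarith⟩ π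
    ⟨by linarith, le_rfl⟩
  · rw [Q_top hf, heq] at key
    simp only [hb, re_add_mul_I, im_add_mul_I] at key
    nlinarith [mul_pos hεpos (pow_pos hηpos 2)]
  · intro z r hr
    have : b = fun z : ℂ => (-(ε : ℂ) * ((η ^ 2 / 2 + π : ℝ) - (z - (x₀ + π * I)) ^ 2
        + I * z)).re := by
      ext z
      simp only [hb, sq, Complex.mul_re, Complex.add_re, Complex.sub_re, Complex.neg_re,
        Complex.ofReal_re, Complex.sub_im, Complex.add_im, Complex.neg_im, Complex.ofReal_im,
        Complex.mul_im, Complex.I_re, Complex.I_im]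
      ring
    rw [this, circleAverage_re_comp (by fun_prop)]
  · intro x _ δ h0 h1
    simp only [hb, re_add_mul_I, im_add_mul_I]
    nlinarith [mul_nonneg hεpos.le (sq_nonneg δ)]
  · intro φ hφ y hy
    refine (Q_nonpos hf hφ ⟨by linarith [hy.1], hy.2⟩).trans ?_
    simp only [hb, re_add_mul_I, im_add_mul_I]
    have h1 : (y - π) ^ 2 ≤ h := by nlinarith [hy.1, hy.2]
    have h2 : π - y ≤ h := by linarith [hy.1]
    nlinarith
  · intro φ hφ y hy
    refine (Q_nonpos hf hφ ⟨by linarith [hy.1], hy.2⟩).trans ?_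
    simp only [hb, re_add_mul_I, im_add_mul_I]
    have h1 : (y - π) ^ 2 ≤ h := by nlinarith [hy.1, hy.2]
    have h2 : π - y ≤ h := by linarith [hy.1]
    nlinarith
  · intro φ hφ x hx
    refine (hQm φ hφ x hx).trans ?_
    simp only [hb, re_add_mul_I, im_add_mul_I]
    have h1 : (π - h - π) ^ 2 ≤ h := by nlinarith
    have h2 := mul_nonneg hεpos.le (sq_nonneg (x - x₀))
    nlinarith
  · intro x hx
    right
    by_contra! hno
    apply ha
    apply closedBall_subset_of_green_ne_zero hf hno
    rw [mem_closedBall_zero_iff, ← Real.log_le_iff_le_exp ha0]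
    linarith [hx.1]

lemma isPreconnected_strip : IsPreconnected {z : ℂ | 0 < z.im ∧ z.im < π} := by
  apply Convex.isPreconnected
  have h1 := (convex_Ioo (0 : ℝ) π).is_linear_preimage (f := Complex.im) Complex.imLm.isLinear
  exact h1

/-- The strong maximum principle in the strip. -/
lemma Q_eq_zero_of_exists {f : ℂ → ℂ} (hf : InClassS f) {φ : ℝ} (hφ : φ ∈ Icc (-(2 * π)) 0)
    {z₀ : ℂ} (h0 : 0 < z₀.im) (hπ : z₀.im < π) (hQ : Q f φ z₀ = 0) {z : ℂ} (hz0 : 0 < z.im)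
    (hzπ : z.im < π) : Q f φ z = 0 := by
  have hQc := continuous_Q_right hf φ
  set s : Set ℂ := {z : ℂ | 0 < z.im ∧ z.im < π} with hs
  have hso : IsOpen s :=
    (isOpen_lt continuous_const Complex.continuous_im).inter
      (isOpen_lt Complex.continuous_im continuous_const)
  have hle : ∀ w ∈ s, Q f φ w ≤ 0 := fun w hw => by
    have := Q_nonpos hf hφ (x := w.re) (y := w.im) ⟨hw.1.le, hw.2.le⟩
    rwa [Complex.re_add_im] at this
  have hsub := isPreconnected_strip.subset_of_closure_inter_subset
    (u := s ∩ Q f φ ⁻¹' {0}) ?_ ⟨z₀, ⟨h0, hπ⟩, ⟨h0, hπ⟩, hQ⟩ ?_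
  · exact (hsub ⟨hz0, hzπ⟩).2
  · rw [Metric.isOpen_iff]
    rintro w ⟨hws, hw⟩
    obtain ⟨ε, hε, hball⟩ := Metric.isOpen_iff.1 hso w hws
    refine ⟨ε, hε, fun v hv => ⟨hball hv, ?_⟩⟩
    rcases eq_or_ne v w with rfl | hne
    · exact hw
    have hr : 0 < dist v w := dist_pos.2 hne
    have hsph : sphere w (dist v w) ⊆ s := fun u hu => hball (by
      rw [mem_ball, mem_sphere.1 hu]; exact hv)
    refine eq_on_sphere_of_submean hQc hr (Q_submean hf φ hr hws.1.le ?_) (ge_of_eq hw)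
      (fun u hu => hle u (hsph hu)) v rfl
    have : w + (dist v w : ℝ) * I ∈ s := hsph (by simp)
    have h2 := this.2
    simpa using h2
  · rintro w ⟨hwc, hws⟩
    refine ⟨hws, ?_⟩
    have : w ∈ closure (Q f φ ⁻¹' {0}) := closure_mono inter_subset_right hwc
    rwa [(isClosed_singleton.preimage hQc).closure_eq] at this

/-- If all segment integrals vanish, differentiating in the length of the segment and letting it
tend to the full period identifies `green f` with `green koebe` along the slit. -/
lemma green_eq_of_Q_eq_zero {f : ℂ → ℂ} (hf : InClassS f) {φ : ℝ}
    (hQ : ∀ z : ℂ, 0 < z.im → z.im < π → Q f φ z = 0) (x : ℝ) :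
    green f (x + π * I + φ * I) = green koebe (x + π * I) := by
  set d : ℝ → ℝ := fun s => green f (x + s * I + φ * I) - green koebe (x + s * I) with hd
  have hdc : Continuous d :=
    ((continuous_green hf).comp (by fun_prop)).sub ((continuous_green koebe_mem).comp (by fun_prop))
  have hdn : Continuous fun s => d (-s) := hdc.comp continuous_neg
  have hsum : Continuous fun s => d s + d (-s) := hdc.add hdn
  have hInt : ∀ y ∈ Ioo 0 π, ∫ s in (0 : ℝ)..y, (d s + d (-s)) = 0 := by
    intro y hy
    have := hQ (x + y * I) (by rw [im_add_mul_I]; exact hy.1) (by rw [im_add_mul_I]; exact hy.2)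
    rw [Q, re_add_mul_I, im_add_mul_I] at this
    rw [intervalIntegral.integral_add (hdc.intervalIntegrable _ _) (hdn.intervalIntegrable _ _),
      intervalIntegral.integral_comp_neg, neg_zero, add_comm,
      intervalIntegral.integral_add_adjacent_intervals (hdc.intervalIntegrable _ _)
      (hdc.intervalIntegrable _ _)]
    exact this
  have hzero : ∀ y ∈ Ioo 0 π, d y + d (-y) = 0 := by
    intro y hy
    have h1 : HasDerivAt (fun y => ∫ s in (0 : ℝ)..y, (d s + d (-s))) (d y + d (-y)) y :=
      intervalIntegral.integral_hasDerivAt_right (hsum.intervalIntegrable _ _)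
        (hsum.stronglyMeasurableAtFilter _ _) hsum.continuousAt
    have h2 : HasDerivAt (fun y => ∫ s in (0 : ℝ)..y, (d s + d (-s))) 0 y := by
      apply (hasDerivAt_const y (0 : ℝ)).congr_of_eventuallyEq
      filter_upwards [isOpen_Ioo.mem_nhds hy] with t ht using hInt t ht
    exact h1.unique h2
  have hπ : d π + d (-π) = 0 := by
    have hcl : IsClosed {y | d y + d (-y) = 0} := isClosed_eq hsum continuous_const
    have : closure (Ioo 0 π) ⊆ {y | d y + d (-y) = 0} := closure_minimal hzero hcl
    rw [closure_Ioo pi_pos.ne] at this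
    exact this ⟨pi_pos.le, le_rfl⟩
  have hper : d (-π) = d π := by
    simp only [hd]
    congr 1
    · apply green_congr
      rw [← Complex.exp_periodic]
      congr 1
      push_cast
      ring
    · apply green_congr
      rw [← Complex.exp_periodic]
      congr 1
      push_cast
      ring
  have : d π = 0 := by linarith
  simp only [hd] at this
  linarith

/-- Equality of circular means at one large radius characterises the Koebe function. -/
theorem isKoebeRotation_of_greenMean_eq {f : ℂ → ℂ} (hf : InClassS f) {a : ℂ}
    (ha : a ∉ f '' ball 0 1) {x₀ : ℝ} (hx₀ : ‖a‖ < Real.exp x₀)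
    (heq : greenMean f x₀ = greenMean koebe x₀) : IsKoebeRotation f := by
  obtain ⟨φ, hφ, z₀, h0, hπ, hQ⟩ := exists_Q_eq_zero hf ha hx₀ heq
  apply isKoebeRotation_of_omits hf φ
  intro z hz R hR
  have hRpos : 0 < R := by linarith
  have hexp : Complex.exp (Real.log R + π * I) = -(R : ℂ) := by
    rw [Complex.exp_add, Complex.exp_pi_mul_I, ← Complex.ofReal_exp, Real.exp_log hRpos]
    ring
  have h1 := green_eq_of_Q_eq_zero hf (φ := φ)
    (fun z hz0 hzπ => Q_eq_zero_of_exists hf hφ h0 hπ hQ hz0 hzπ) (Real.log R)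
  rw [green_koebe_eq_zero hR hexp] at h1
  have h2 := ne_exp_of_green_eq_zero hf h1 hz
  rw [Complex.exp_add, hexp] at h2
  rwa [neg_mul] at h2

/-! ### Parseval's identity for the logarithmic coefficients -/

lemma hasSum_congr {E : Type*} [AddCommMonoid E] [TopologicalSpace E] {u v : ℕ → E} {a : E}
    (h : ∀ n, u n = v n) : HasSum u a ↔ HasSum v a := by
  rw [funext h]

lemma norm_exp_int_mul (n : ℤ) (θ : ℝ) : ‖Complex.exp (n * (θ * I))‖ = 1 := by
  have : (n : ℂ) * (θ * I) = ((n * θ : ℝ) : ℂ) * I := by push_cast; ring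
  rw [this, Complex.norm_exp_ofReal_mul_I]

lemma integral_exp_int_mul (n : ℤ) :
    ∫ θ in (0 : ℝ)..2 * π, Complex.exp (n * (θ * I)) = if n = 0 then 2 * π else 0 := by
  split_ifs with h
  · simp [h]
  · have hn : (n : ℂ) * I ≠ 0 := mul_ne_zero (by exact_mod_cast h) I_ne_zero
    have e : ∀ θ : ℝ, (n : ℂ) * (θ * I) = (n * I) * θ := fun θ => by ring
    simp_rw [e]
    rw [integral_exp_mul_complex hn]
    have : Complex.exp (n * I * ((2 * π : ℝ) : ℂ)) = 1 := by
      rw [← Complex.exp_int_mul_two_pi_mul_I n]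
      congr 1
      push_cast
      ring
    rw [this]
    simp

lemma hasSum_integral_mul {c : ℕ → ℂ} (hc : Summable fun n => ‖c n‖) {e : ℕ → ℝ → ℂ}
    (he : ∀ n, Continuous (e n)) (he1 : ∀ n θ, ‖e n θ‖ = 1) {K : ℝ → ℂ} (hK : Continuous K)
    {C : ℝ} (hC : ∀ θ, ‖K θ‖ ≤ C) {G : ℝ → ℂ} (hG : ∀ θ, HasSum (fun n => c n * e n θ) (G θ)) :
    HasSum (fun n => c n * ∫ θ in (0 : ℝ)..2 * π, K θ * e n θ)
      (∫ θ in (0 : ℝ)..2 * π, K θ * G θ) := by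
  have := intervalIntegral.hasSum_integral_of_dominated_convergence (μ := volume)
    (a := 0) (b := 2 * π) (F := fun n θ => K θ * (c n * e n θ)) (f := fun θ => K θ * G θ)
    (fun n _ => C * ‖c n‖) ?_ ?_ ?_ ?_ ?_
  · have e : ∀ n, ∫ θ in (0 : ℝ)..2 * π, K θ * (c n * e n θ) =
        c n * ∫ θ in (0 : ℝ)..2 * π, K θ * e n θ := fun n => by
      rw [← intervalIntegral.integral_const_mul]
      congr 1
      ext θ
      ring
    simpa only [e] using this
  · intro n
    exact (hK.mul (continuous_const.mul (he n))).aestronglyMeasurable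
  · intro n
    refine Eventually.of_forall fun θ _ => ?_
    rw [norm_mul, norm_mul, he1, mul_one]
    exact mul_le_mul_of_nonneg_right (hC θ) (norm_nonneg _)
  · exact Eventually.of_forall fun θ _ => hc.mul_left C
  · exact intervalIntegrable_const
  · exact Eventually.of_forall fun θ _ => (hG θ).mul_left _

/-- Parseval's identity for an absolutely convergent one-sided Fourier series. -/
lemma parseval {c : ℕ → ℂ} (hc : Summable fun n => ‖c n‖) {G : ℝ → ℂ} (hGc : Continuous G)
    (hG : ∀ θ : ℝ, HasSum (fun n => c n * Complex.exp ((n : ℤ) * (θ * I))) (G θ)) :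
    HasSum (fun n => ‖c n‖ ^ 2) ((2 * π)⁻¹ * ∫ θ in (0 : ℝ)..2 * π, ‖G θ‖ ^ 2) := by
  have hcont : ∀ n : ℤ, Continuous fun θ : ℝ => Complex.exp (n * (θ * I)) := fun n => by fun_prop
  have hGb : ∀ θ, ‖G θ‖ ≤ ∑' n, ‖c n‖ := fun θ => by
    apply (hG θ).norm_le_of_bounded hc.hasSum
    intro n
    rw [norm_mul, norm_exp_int_mul, mul_one]
  have hcoef : ∀ n : ℕ, ∫ θ in (0 : ℝ)..2 * π, G θ * Complex.exp ((-n : ℤ) * (θ * I)) =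
      2 * π * c n := by
    intro n
    have h1 := hasSum_integral_mul hc (fun m : ℕ => hcont m) (fun m θ => norm_exp_int_mul m θ)
      (hcont (-n)) (C := 1) (fun θ => (norm_exp_int_mul _ _).le) hG
    have h2 : ∀ m : ℕ, c m * ∫ θ in (0 : ℝ)..2 * π,
        Complex.exp ((-n : ℤ) * (θ * I)) * Complex.exp ((m : ℤ) * (θ * I)) =
        if m = n then 2 * π * c n else 0 := by
      intro m
      have h3 := integral_exp_int_mul (-n + m)
      have h4 : ∀ θ : ℝ, Complex.exp ((-n : ℤ) * (θ * I)) * Complex.exp ((m : ℤ) * (θ * I)) =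
          Complex.exp ((-n + m : ℤ) * (θ * I)) := fun θ => by
        rw [← Complex.exp_add]
        congr 1
        push_cast
        ring
      simp_rw [h4, h3]
      by_cases hmn : m = n
      · subst hmn
        simp [mul_comm]
      · rw [if_neg hmn, if_neg (by omega), Complex.ofReal_zero, mul_zero]
    simp_rw [h2] at h1
    have h5 := h1.unique (hasSum_ite_eq n (2 * π * c n))
    rw [← h5]
    congr 1
    ext θ
    ring
  have hconj : ∀ θ : ℝ, HasSum (fun n => (starRingEnd ℂ) (c n) * Complex.exp ((-n : ℤ) * (θ * I)))
      ((starRingEnd ℂ) (G θ)) := by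
    intro θ
    have := Complex.hasSum_conj'.2 (hG θ)
    convert this using 2 with n
    rw [map_mul, ← Complex.exp_conj]
    simp
  have h6 := hasSum_integral_mul (by simpa using hc) (fun n : ℕ => hcont (-n))
    (fun n θ => norm_exp_int_mul _ _) hGc hGb hconj
  simp_rw [hcoef] at h6
  have h7 : ∀ n, (starRingEnd ℂ) (c n) * (2 * π * c n) = ((2 * π * ‖c n‖ ^ 2 : ℝ) : ℂ) := by
    intro n
    have := Complex.conj_mul' (c n)
    push_cast
    rw [← this]
    ring
  have h8 : ∀ θ, G θ * (starRingEnd ℂ) (G θ) = ((‖G θ‖ ^ 2 : ℝ) : ℂ) := fun θ => by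
    rw [Complex.mul_conj']
    push_cast
    rfl
  simp_rw [h7, h8] at h6
  rw [intervalIntegral.integral_ofReal, Complex.hasSum_ofReal] at h6
  have h9 := h6.mul_left (2 * π)⁻¹
  have hπ : (2 * π) ≠ 0 := two_pi_pos.ne'
  refine (hasSum_congr fun n => ?_).2 h9
  field_simp

/-- The coefficients of `g`, where `g` is the branch of `log (f z / z)` defining `γ`. -/
lemma hasSum_logCoeffs {g : ℂ → ℂ} {γ : ℕ → ℂ} (hg : AnalyticOnNhd ℂ g (ball (0 : ℂ) 1))
    (hg0 : g 0 = 0) (hγ : ∀ n : ℕ, 1 ≤ n → iteratedDeriv n g 0 = (n.factorial : ℂ) * (2 * γ n))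
    {z : ℂ} (hz : z ∈ ball (0 : ℂ) 1) :
    HasSum (fun n : ℕ => (if n = 0 then 0 else 2 * γ n) * z ^ n) (g z) := by
  have h := Complex.hasSum_taylorSeries_on_ball hg.differentiableOn hz
  refine (hasSum_congr fun n => ?_).2 h
  rcases Nat.eq_zero_or_pos n with rfl | hn
  · simp [hg0]
  · rw [if_neg hn.ne', hγ n hn]
    have : (n.factorial : ℂ) ≠ 0 := by exact_mod_cast n.factorial_ne_zero
    simp only [smul_eq_mul, sub_zero]
    field_simp

/-- The mean of `re (g ^ 2)` vanishes, so the squares of the real and imaginary parts of `g` have equal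
means. -/
lemma integral_re_sq {g : ℂ → ℂ} (hg : AnalyticOnNhd ℂ g (ball (0 : ℂ) 1))
    (hg0 : g 0 = 0) {ρ : ℝ} (h0 : 0 < ρ) (h1 : ρ < 1) :
    ∫ θ in (0 : ℝ)..2 * π, (g (circleMap 0 ρ θ)).re ^ 2 =
      2⁻¹ * ∫ θ in (0 : ℝ)..2 * π, ‖g (circleMap 0 ρ θ)‖ ^ 2 := by
  have hc : Continuous fun θ => g (circleMap 0 ρ θ) :=
    hg.continuousOn.comp_continuous (continuous_circleMap 0 ρ)
      (fun θ => circleMap_mem_unitBall h0 h1 θ)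
  have havg : circleAverage (fun z => (g z ^ 2).re) 0 ρ = (g 0 ^ 2).re := by
    apply InnerProductSpace.HarmonicOnNhd.circleAverage_eq
    intro w hw
    have hw' : w ∈ ball (0 : ℂ) 1 := by
      rw [abs_of_pos h0] at hw
      exact closedBall_subset_ball h1 hw
    exact ((hg w hw').pow 2).harmonicAt_re
  have hzero : ∫ θ in (0 : ℝ)..2 * π, (g (circleMap 0 ρ θ) ^ 2).re = 0 := by
    rw [circleAverage_def, hg0, smul_eq_mul] at havg
    simpa [pi_ne_zero] using havg
  have e : ∀ θ, (g (circleMap 0 ρ θ)).re ^ 2 =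
      2⁻¹ * ‖g (circleMap 0 ρ θ)‖ ^ 2 + 2⁻¹ * (g (circleMap 0 ρ θ) ^ 2).re := fun θ => by
    rw [← Complex.normSq_eq_norm_sq, Complex.normSq_apply, sq (g _), Complex.mul_re]
    ring
  simp_rw [e]
  rw [intervalIntegral.integral_add, intervalIntegral.integral_const_mul,
    intervalIntegral.integral_const_mul, hzero, mul_zero, add_zero]
  · exact (Continuous.mul continuous_const (hc.norm.pow 2)).intervalIntegrable _ _
  · exact (Continuous.mul continuous_const (Complex.continuous_re.comp (hc.pow 2))).intervalIntegrable
      _ _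

/-- The `L²` norm of `log |f(z) / z|` on circles in terms of the logarithmic coefficients. -/
lemma hasSum_sq_logCoeffs {g : ℂ → ℂ} {γ : ℕ → ℂ} (hg : AnalyticOnNhd ℂ g (ball (0 : ℂ) 1))
    (hg0 : g 0 = 0) (hγ : ∀ z ∈ ball (0 : ℂ) 1,
      HasSum (fun n : ℕ => (if n = 0 then 0 else 2 * γ n) * z ^ n) (g z))
    {ρ : ℝ} (h0 : 0 < ρ) (h1 : ρ < 1) :
    HasSum (fun n : ℕ => ‖γ (n + 1)‖ ^ 2 * (ρ ^ (n + 1)) ^ 2)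
      ((2 * π)⁻¹ * ∫ θ in (0 : ℝ)..2 * π, 2⁻¹ * (g (circleMap 0 ρ θ)).re ^ 2) := by
  set c : ℕ → ℂ := fun n => (if n = 0 then 0 else 2 * γ n) * (ρ : ℂ) ^ n with hcdef
  have hρ : (ρ : ℂ) ∈ ball (0 : ℂ) 1 := by simpa [abs_of_pos h0] using h1
  have hc : Summable fun n => ‖c n‖ := (hγ _ hρ).summable.norm
  have hGc : Continuous fun θ => g (circleMap 0 ρ θ) :=
    hg.continuousOn.comp_continuous (continuous_circleMap 0 ρ)
      (fun θ => circleMap_mem_unitBall h0 h1 θ)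
  have hP := parseval hc hGc (fun θ => by
    have := hγ _ (circleMap_mem_unitBall h0 h1 θ)
    refine (hasSum_congr fun n => ?_).2 this
    simp only [circleMap_zero, mul_pow, ← Complex.exp_nat_mul, hcdef, Int.cast_natCast]
    ring)
  rw [intervalIntegral.integral_const_mul, integral_re_sq hg hg0 h0 h1]
  rw [← hasSum_nat_add_iff' 1] at hP
  have hP' := hP.mul_left (4⁻¹)
  have hterm : ∀ n, ‖γ (n + 1)‖ ^ 2 * (ρ ^ (n + 1)) ^ 2 = 4⁻¹ * ‖c (n + 1)‖ ^ 2 := fun n => by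
    simp only [hcdef, Nat.add_eq_zero_iff, one_ne_zero, and_false, if_false, norm_mul, norm_pow,
      Complex.norm_real, Real.norm_eq_abs, abs_of_pos h0, Complex.norm_ofNat]
    ring
  rw [hasSum_congr hterm]
  have hc0 : c 0 = 0 := by simp [hcdef]
  rw [Finset.sum_range_one, hc0, norm_zero] at hP'
  have hval : ∀ J : ℝ, (2 * π)⁻¹ * (2⁻¹ * (2⁻¹ * J)) = 4⁻¹ * ((2 * π)⁻¹ * J - 0 ^ 2) := fun J => by
    ring
  rwa [hval]

/-! ### Dilates and the layer-cake formula -/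

/-- The dilate `f(ρ z) / ρ`. -/
noncomputable def dilate (f : ℂ → ℂ) (ρ : ℝ) (z : ℂ) : ℂ := f (ρ * z) / ρ

lemma mul_mem_ball {ρ : ℝ} (h0 : 0 < ρ) (h1 : ρ < 1) {z : ℂ} (hz : z ∈ ball (0 : ℂ) 1) :
    (ρ : ℂ) * z ∈ ball (0 : ℂ) 1 := by
  rw [mem_ball_zero_iff] at hz ⊢
  rw [norm_mul, Complex.norm_real, Real.norm_of_nonneg h0.le]
  nlinarith [norm_nonneg z]

lemma dilate_mem {f : ℂ → ℂ} (hf : InClassS f) {ρ : ℝ} (h0 : 0 < ρ) (h1 : ρ < 1) :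
    InClassS (dilate f ρ) := by
  have hρ : (ρ : ℂ) ≠ 0 := by exact_mod_cast h0.ne'
  refine ⟨?_, ?_, by simp [dilate, hf.2.2.1], ?_⟩
  · intro z hz
    have h2 : AnalyticAt ℂ (fun z : ℂ => f (ρ * z)) z :=
      (hf.1 _ (mul_mem_ball h0 h1 hz)).fun_comp (by fun_prop)
    exact h2.div analyticAt_const hρ
  · intro z hz w hw hzw
    have h2 : f (ρ * z) = f (ρ * w) := by
      simp only [dilate] at hzw
      field_simp at hzw
      exact hzw
    have h3 := hf.2.1 (mul_mem_ball h0 h1 hz) (mul_mem_ball h0 h1 hw) h2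
    exact mul_left_cancel₀ hρ h3
  · have h2 : HasDerivAt f 1 ((ρ : ℂ) * 0) := by
      rw [mul_zero, ← hf.2.2.2]
      exact (hf.1 0 (by simp)).differentiableAt.hasDerivAt
    have h3 : HasDerivAt (fun z : ℂ => (ρ : ℂ) * z) ρ 0 := by
      simpa using (hasDerivAt_id (0 : ℂ)).const_mul (ρ : ℂ)
    have h4 := (h2.comp (0 : ℂ) h3).div_const (ρ : ℂ)
    rw [one_mul, div_self hρ] at h4
    exact h4.deriv

lemma green_dilate {f : ℂ → ℂ} (hf : InClassS f) {ρ : ℝ} (h0 : 0 < ρ) (h1 : ρ < 1) (ζ : ℂ) :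
    green (dilate f ρ) ζ = max (green f (ζ + Real.log ρ) + Real.log ρ) 0 := by
  have hρ : (ρ : ℂ) ≠ 0 := by exact_mod_cast h0.ne'
  have hexp : Complex.exp (ζ + Real.log ρ) = Complex.exp ζ * ρ := by
    rw [Complex.exp_add, ← Complex.ofReal_exp, Real.exp_log h0]
  have hlog : Real.log ρ < 0 := Real.log_neg h0 h1
  by_cases hex : ∃ z ∈ ball (0 : ℂ) 1, dilate f ρ z = Complex.exp ζ
  · obtain ⟨z, hz, hfz⟩ := hex
    have hz0 := ne_zero_of_eq_exp (dilate_mem hf h0 h1) hfz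
    have hfz' : f (ρ * z) = Complex.exp (ζ + Real.log ρ) := by
      rw [hexp, ← hfz, dilate]
      field_simp
    rw [green_eq (dilate_mem hf h0 h1) hz hfz, green_eq hf (mul_mem_ball h0 h1 hz) hfz', norm_mul,
      Complex.norm_real, Real.norm_of_nonneg h0.le, Real.log_mul h0.ne' (norm_ne_zero_iff.2 hz0)]
    have := Real.log_nonpos (norm_nonneg z) (mem_ball_zero_iff.1 hz).le
    rw [max_eq_left (by linarith)]
    ring
  · rw [green_eq_zero (by simpa using hex), max_eq_right]
    by_contra! hcon
    obtain ⟨w, hw, hfw⟩ := (lt_green_iff hf (t := -Real.log ρ) (by linarith)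
      (ζ + Real.log ρ)).1 (by linarith)
    rw [neg_neg, Real.exp_log h0] at hw
    refine hex ⟨w / ρ, ?_, ?_⟩
    · rw [mem_ball_zero_iff, norm_div, Complex.norm_real, Real.norm_of_nonneg h0.le, div_lt_one h0]
      exact hw
    · rw [dilate, mul_div_cancel₀ _ hρ, hfw, hexp, mul_div_assoc, div_self hρ, mul_one]

lemma greenMean_dilate {f : ℂ → ℂ} (hf : InClassS f) {ρ : ℝ} (h0 : 0 < ρ) (h1 : ρ < 1) (x : ℝ) :
    greenMean (dilate f ρ) x =
      ∫ α in 0..2 * π, max (green f (x + Real.log ρ + α * I) + Real.log ρ) 0 := by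
  rw [greenMean]
  congr 1
  ext α
  rw [green_dilate hf h0 h1]
  congr 3
  ring

/-- `g` is a branch of `log (f z / z)`, normalised at `0`, and has Taylor coefficients `2 γ n`. -/
structure IsBranch (f g : ℂ → ℂ) (γ : ℕ → ℂ) : Prop where
  analytic : AnalyticOnNhd ℂ g (ball (0 : ℂ) 1)
  zero : g 0 = 0
  exp_eq : ∀ z ∈ ball (0 : ℂ) 1, z ≠ 0 → Complex.exp (g z) = f z / z
  hasSum : ∀ z ∈ ball (0 : ℂ) 1,
    HasSum (fun n : ℕ => (if n = 0 then 0 else 2 * γ n) * z ^ n) (g z)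

lemma log_norm_eq {f g : ℂ → ℂ} {γ : ℕ → ℂ} (hb : IsBranch f g γ) {ρ : ℝ} (h0 : 0 < ρ)
    (h1 : ρ < 1) (θ : ℝ) :
    Real.log ‖f (circleMap 0 ρ θ)‖ = (g (circleMap 0 ρ θ)).re + Real.log ρ := by
  set z := circleMap 0 ρ θ
  have hnorm : ‖z‖ = ρ := by rw [norm_circleMap_zero, abs_of_pos h0]
  have hz0 : z ≠ 0 := by rw [← norm_pos_iff, hnorm]; exact h0
  have hz := hb.exp_eq z (circleMap_mem_unitBall h0 h1 θ) hz0
  rw [eq_div_iff hz0] at hz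
  rw [← hz, norm_mul, hnorm, Complex.norm_exp, Real.log_mul (Real.exp_pos _).ne' h0.ne',
    Real.log_exp]

lemma greenMean_dilate_eq {f g : ℂ → ℂ} {γ : ℕ → ℂ} (hf : InClassS f) (hb : IsBranch f g γ) {ρ : ℝ}
    (h0 : 0 < ρ) (h1 : ρ < 1) (x : ℝ) :
    greenMean (dilate f ρ) x = ∫ θ in 0..2 * π, max ((g (circleMap 0 ρ θ)).re - x) 0 := by
  have := integral_max_green hf h0 h1 (x + Real.log ρ)
  rw [greenMean_dilate hf h0 h1]
  push_cast at this
  rw [this]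
  congr 1
  ext θ
  rw [log_norm_eq hb h0 h1]
  congr 1
  ring

/-- The excess of the circular mean of Green's function over that of the disk. -/
noncomputable def excess (f : ℂ → ℂ) (x : ℝ) : ℝ := greenMean f x - 2 * π * max (-x) 0

lemma excess_nonneg {f : ℂ → ℂ} (hf : InClassS f) (x : ℝ) : 0 ≤ excess f x := by
  rw [excess]
  rcases le_total 0 (-x) with h | h
  · rw [max_eq_left h]
    linarith [neg_le_greenMean hf x]
  · rw [max_eq_right h]
    linarith [greenMean_nonneg hf x]

lemma excess_le {f : ℂ → ℂ} (hf : InClassS f) (x : ℝ) : excess f x ≤ excess koebe x := by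
  rw [excess, excess]
  linarith [greenMean_le hf x]

lemma continuous_excess {f : ℂ → ℂ} (hf : InClassS f) : Continuous (excess f) := by
  apply Continuous.sub
  · apply intervalIntegral.continuous_parametric_intervalIntegral_of_continuous'
    exact (continuous_green hf).comp (by fun_prop : Continuous fun p : ℝ × ℝ => (p.1 : ℂ) + p.2 * I)
  · fun_prop

lemma tendsto_excess_dilate {f : ℂ → ℂ} (hf : InClassS f) {ρ : ℕ → ℝ} (h0 : ∀ j, 0 < ρ j)
    (h1 : ∀ j, ρ j < 1) (hρ : Tendsto ρ atTop (𝓝 1)) (x : ℝ) :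
    Tendsto (fun j => excess (dilate f (ρ j)) x) atTop (𝓝 (excess f x)) := by
  apply Tendsto.sub _ tendsto_const_nhds
  simp_rw [fun j => greenMean_dilate hf (h0 j) (h1 j) x]
  have hc : Continuous fun t : ℝ => ∫ α in 0..2 * π, max (green f (x + t + α * I) + t) 0 := by
    apply intervalIntegral.continuous_parametric_intervalIntegral_of_continuous'
    exact (((continuous_green hf).comp (by fun_prop :
      Continuous fun p : ℝ × ℝ => (x : ℂ) + p.1 + p.2 * I)).add continuous_fst).max continuous_const
  have h2 : Tendsto (fun j => Real.log (ρ j)) atTop (𝓝 0) := by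
    rw [← Real.log_one]
    exact ((Real.continuousAt_log one_ne_zero).tendsto).comp hρ
  have h3 := (hc.tendsto 0).comp h2
  have hval : greenMean f x =
      ∫ α in 0..2 * π, max (green f (x + (0 : ℝ) + α * I) + (0 : ℝ)) 0 := by
    rw [greenMean]
    congr 1
    ext α
    rw [Complex.ofReal_zero, add_zero, add_zero, max_eq_left (green_nonneg f hf _)]
  rw [hval]
  exact h3

lemma integral_max_sub {M t : ℝ} (h1 : -M ≤ t) (h2 : t ≤ M) :
    ∫ x in (-M)..M, max (t - x) 0 = (t + M) ^ 2 / 2 := by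
  have hc : Continuous fun x : ℝ => max (t - x) 0 := by fun_prop
  rw [← intervalIntegral.integral_add_adjacent_intervals (hc.intervalIntegrable _ t)
    (hc.intervalIntegrable _ _)]
  have e1 : ∫ x in (-M)..t, max (t - x) 0 = ∫ x in (-M)..t, (t - x) := by
    apply intervalIntegral.integral_congr
    intro x hx
    rw [uIcc_of_le h1] at hx
    exact max_eq_left (by linarith [hx.2])
  have e2 : ∫ x in t..M, max (t - x) 0 = ∫ x in t..M, (0 : ℝ) := by
    apply intervalIntegral.integral_congr
    intro x hx
    rw [uIcc_of_le h2] at hx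
    exact max_eq_right (by linarith [hx.1])
  rw [e1, e2]
  have hid : Continuous fun x : ℝ => x := continuous_id
  rw [intervalIntegral.integral_sub intervalIntegrable_const (hid.intervalIntegrable _ _)]
  simp
  ring

/-- The layer-cake formula for a function of mean zero. -/
lemma integral_layer {h : ℝ → ℝ} (hc : Continuous h) {M : ℝ} (hM : ∀ θ, |h θ| < M)
    (hmean : ∫ θ in 0..2 * π, h θ = 0) {W : ℝ → ℝ} (hWc : Continuous W)
    (hW : ∀ x, W x = (∫ θ in 0..2 * π, max (h θ - x) 0) - 2 * π * max (-x) 0) :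
    Integrable W ∧ ∫ x, W x = ∫ θ in 0..2 * π, 2⁻¹ * h θ ^ 2 := by
  have hM0 : 0 < M := (abs_nonneg _).trans_lt (hM 0)
  have hhi : IntervalIntegrable h volume 0 (2 * π) := hc.intervalIntegrable _ _
  have hzero : ∀ x, x ∉ Ioc (-M) M → W x = 0 := by
    intro x hx
    rw [hW]
    rcases le_or_gt x (-M) with h1 | h1
    · have e : ∀ θ, max (h θ - x) 0 = h θ - x := fun θ =>
        max_eq_left (by linarith [(abs_lt.1 (hM θ)).1])
      simp_rw [e]
      rw [intervalIntegral.integral_sub hhi intervalIntegrable_const, hmean,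
        max_eq_left (by linarith)]
      simp
    · have h2 : M < x := by
        by_contra! h3
        exact hx ⟨h1, h3⟩
      have e : ∀ θ, max (h θ - x) 0 = 0 := fun θ =>
        max_eq_right (by linarith [(abs_lt.1 (hM θ)).2])
      simp_rw [e]
      rw [max_eq_right (by linarith)]
      simp
  refine ⟨hWc.integrable_of_hasCompactSupport (HasCompactSupport.intro
    (isCompact_Icc (a := -M) (b := M)) fun x hx => hzero x fun h => hx (Ioc_subset_Icc_self h)), ?_⟩
  have hsupp : Function.support W ⊆ Ioc (-M) M := fun x hx => by
    by_contra h1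
    exact hx (hzero x h1)
  rw [← intervalIntegral.integral_eq_integral_of_support_subset hsupp]
  have hjc : Continuous (Function.uncurry fun x θ : ℝ => max (h θ - x) 0 - max (-x) 0) := by
    change Continuous fun p : ℝ × ℝ => max (h p.2 - p.1) 0 - max (-p.1) 0
    fun_prop
  have hW' : ∀ x, W x = ∫ θ in 0..2 * π, (max (h θ - x) 0 - max (-x) 0) := by
    intro x
    have hm : Continuous fun θ => max (h θ - x) 0 := by fun_prop
    rw [hW, intervalIntegral.integral_sub (hm.intervalIntegrable _ _) intervalIntegrable_const]
    simp
  simp_rw [hW']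
  rw [intervalIntegral_intervalIntegral_swap]
  · have e : ∀ θ, ∫ x in (-M)..M, (max (h θ - x) 0 - max (-x) 0) =
        2⁻¹ * h θ ^ 2 + M * h θ := by
      intro θ
      have h1 := abs_lt.1 (hM θ)
      have c1 : Continuous fun x : ℝ => max (h θ - x) 0 := by fun_prop
      have c2 : Continuous fun x : ℝ => max (-x) 0 := by fun_prop
      have e2 := integral_max_sub (M := M) (t := 0) (by linarith) hM0.le
      simp only [zero_sub, zero_add] at e2
      rw [intervalIntegral.integral_sub (c1.intervalIntegrable _ _) (c2.intervalIntegrable _ _),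
        integral_max_sub h1.1.le h1.2.le, e2]
      ring
    simp_rw [e]
    have c3 : Continuous fun θ => 2⁻¹ * h θ ^ 2 := by fun_prop
    rw [intervalIntegral.integral_add (c3.intervalIntegrable _ _) (hhi.const_mul M),
      intervalIntegral.integral_const_mul M, hmean, mul_zero, add_zero]
  · exact (hjc.continuousOn.integrableOn_compact
      (isCompact_uIcc.prod isCompact_uIcc)).mono_set
      (prod_mono uIoc_subset_uIcc uIoc_subset_uIcc)

lemma integral_excess_dilate {f g : ℂ → ℂ} {γ : ℕ → ℂ} (hf : InClassS f) (hb : IsBranch f g γ)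
    {ρ : ℝ} (h0 : 0 < ρ) (h1 : ρ < 1) :
    Integrable (excess (dilate f ρ)) ∧
      HasSum (fun n : ℕ => ‖γ (n + 1)‖ ^ 2 * (ρ ^ (n + 1)) ^ 2)
        ((2 * π)⁻¹ * ∫ x, excess (dilate f ρ) x) := by
  have hc : Continuous fun θ => (g (circleMap 0 ρ θ)).re :=
    Complex.continuous_re.comp (hb.analytic.continuousOn.comp_continuous (continuous_circleMap 0 ρ)
      (fun θ => circleMap_mem_unitBall h0 h1 θ))
  obtain ⟨M, hM⟩ : ∃ M, ∀ θ, |(g (circleMap 0 ρ θ)).re| < M := by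
    obtain ⟨C, hC⟩ := (isCompact_sphere (0 : ℂ) ρ).exists_bound_of_continuousOn
      (hb.analytic.continuousOn.mono (sphere_subset_closedBall.trans (closedBall_subset_ball h1)))
    refine ⟨C + 1, fun θ => ?_⟩
    have := hC _ (circleMap_mem_sphere 0 h0.le θ)
    linarith [Complex.abs_re_le_norm (g (circleMap 0 ρ θ))]
  have hmean : ∫ θ in 0..2 * π, (g (circleMap 0 ρ θ)).re = 0 := by
    have h2 := integral_log_f hf h0 h1
    simp_rw [log_norm_eq hb h0 h1] at h2
    rw [intervalIntegral.integral_add (hc.intervalIntegrable _ _) intervalIntegrable_const] at h2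
    simp only [intervalIntegral.integral_const, smul_eq_mul, sub_zero] at h2
    linarith
  obtain ⟨hi, he⟩ := integral_layer hc hM hmean (continuous_excess (dilate_mem hf h0 h1))
    (fun x => by rw [excess, greenMean_dilate_eq hf hb h0 h1])
  refine ⟨hi, ?_⟩
  rw [he]
  exact hasSum_sq_logCoeffs hb.analytic hb.zero hb.hasSum h0 h1

/-! ### Passage to the limit -/

/-- Radii increasing to `1`. -/
noncomputable def radius (j : ℕ) : ℝ := 1 - 1 / ((j : ℝ) + 2)

lemma radius_pos (j : ℕ) : 0 < radius j := by
  rw [radius, sub_pos, div_lt_one (by positivity)]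
  have : (0 : ℝ) ≤ j := by positivity
  linarith

lemma radius_lt_one (j : ℕ) : radius j < 1 := by
  have : 0 < 1 / ((j : ℝ) + 2) := by positivity
  rw [radius]
  linarith

lemma tendsto_radius : Tendsto radius atTop (𝓝 1) := by
  have h : Tendsto (fun j : ℕ => 1 / ((j : ℝ) + 2)) atTop (𝓝 0) :=
    tendsto_const_nhds.div_atTop (tendsto_natCast_atTop_atTop.atTop_add tendsto_const_nhds)
  have h2 := (tendsto_const_nhds (x := (1 : ℝ))).sub h
  rw [sub_zero] at h2
  exact h2

/-- An Abelian theorem for nonnegative series. -/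
lemma hasSum_of_tendsto_abel {a : ℕ → ℝ} (ha : ∀ n, 0 ≤ a n) {S : ℕ → ℝ} {s : ℝ}
    (hS : ∀ j, HasSum (fun n => a n * (radius j ^ (n + 1)) ^ 2) (S j))
    (hs : Tendsto S atTop (𝓝 s)) : HasSum a s := by
  have hlim : ∀ n, Tendsto (fun j => a n * (radius j ^ (n + 1)) ^ 2) atTop (𝓝 (a n)) := by
    intro n
    have := ((tendsto_radius.pow (n + 1)).pow 2).const_mul (a n)
    simpa using this
  have hnn : ∀ j n, 0 ≤ a n * (radius j ^ (n + 1)) ^ 2 := fun j n =>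
    mul_nonneg (ha n) (sq_nonneg _)
  have hsum : Summable a := by
    apply summable_of_sum_range_le (c := s) ha
    intro N
    have h1 : Tendsto (fun j => ∑ n ∈ Finset.range N, a n * (radius j ^ (n + 1)) ^ 2) atTop
        (𝓝 (∑ n ∈ Finset.range N, a n)) := tendsto_finsetSum _ fun n _ => hlim n
    exact le_of_tendsto_of_tendsto' h1 hs fun j =>
      sum_le_hasSum _ (fun n _ => hnn j n) (hS j)
  have h2 : Tendsto (fun j => ∑' n, a n * (radius j ^ (n + 1)) ^ 2) atTop (𝓝 (∑' n, a n)) := by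
    refine tendsto_tsum_of_dominated_convergence hsum hlim (Eventually.of_forall fun j n => ?_)
    rw [Real.norm_of_nonneg (hnn j n)]
    refine mul_le_of_le_one_right (ha n) (pow_le_one₀ (pow_nonneg (radius_pos j).le _) ?_)
    exact pow_le_one₀ (radius_pos j).le (radius_lt_one j).le
  simp_rw [fun j => (hS j).tsum_eq] at h2
  rw [tendsto_nhds_unique hs h2]
  exact hsum.hasSum

/-- The branch of the logarithm and the logarithmic coefficients `e^{inθ} / n` of a rotation of the
Koebe function. -/
lemma isBranch_rotation {f : ℂ → ℂ} {θ : ℝ}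
    (hf : EqOn f (fun z => z / (1 - Complex.exp (θ * I) * z) ^ 2) (ball (0 : ℂ) 1)) :
    IsBranch f (fun z => 2 * -Complex.log (1 - Complex.exp (θ * I) * z))
      (fun n => Complex.exp (θ * I) ^ n / n) := by
  set u := Complex.exp (θ * I) with hu
  have hnorm : ‖u‖ = 1 := Complex.norm_exp_ofReal_mul_I θ
  have hlt : ∀ z ∈ ball (0 : ℂ) 1, ‖u * z‖ < 1 := by
    intro z hz
    rwa [norm_mul, hnorm, one_mul, ← mem_ball_zero_iff]
  have hslit : ∀ z ∈ ball (0 : ℂ) 1, 1 - u * z ∈ slitPlane := by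
    intro z hz
    left
    have h1 := (Complex.re_le_norm (u * z)).trans_lt (hlt z hz)
    rw [Complex.sub_re, Complex.one_re]
    linarith
  refine ⟨?_, by simp, ?_, ?_⟩
  · intro z hz
    have h1 : AnalyticAt ℂ (fun z : ℂ => 1 - u * z) z := by fun_prop
    exact analyticAt_const.mul (h1.clog (hslit z hz)).neg
  · intro z hz hz0
    have hne := slitPlane_ne_zero (hslit z hz)
    rw [hf hz]
    simp only
    rw [two_mul, Complex.exp_add, Complex.exp_neg, Complex.exp_log hne]
    field_simp
  · intro z hz
    refine (hasSum_congr fun n => ?_).2 ((hasSum_taylorSeries_neg_log (hlt z hz)).mul_left 2)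
    rcases Nat.eq_zero_or_pos n with rfl | hn
    · simp
    · rw [if_neg hn.ne', mul_pow]
      ring

lemma hasSum_rotation (θ : ℝ) :
    HasSum (fun n : ℕ => ‖Complex.exp (θ * I) ^ (n + 1) / ((n + 1 : ℕ) : ℂ)‖ ^ 2) (π ^ 2 / 6) := by
  have h := (hasSum_nat_add_iff' (f := fun n : ℕ => (1 : ℝ) / (n : ℝ) ^ 2) 1).2 hasSum_zeta_two
  simp only [Finset.range_one, Finset.sum_singleton, Nat.cast_zero, ne_eq, OfNat.ofNat_ne_zero,
    not_false_eq_true, zero_pow, div_zero, sub_zero] at h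
  refine (hasSum_congr fun n => ?_).2 h
  rw [norm_div, norm_pow, Complex.norm_exp_ofReal_mul_I, one_pow, Complex.norm_natCast, div_pow,
    one_pow]

lemma koebe_eqOn :
    EqOn koebe (fun z => z / (1 - Complex.exp ((0 : ℝ) * I) * z) ^ 2) (ball (0 : ℂ) 1) := by
  intro z _
  simp [koebe]

/-- The dominating function for all limits taken along dilates; its integrability is Fatou's lemma
along the dilates of the Koebe function, whose integrals are partial Abel sums of `∑ 1 / n ^ 2`. -/
lemma integrable_excess_koebe : Integrable (excess koebe) := by
  have hb := isBranch_rotation koebe_eqOn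
  have hmem := fun j => dilate_mem koebe_mem (radius_pos j) (radius_lt_one j)
  refine integrable_of_tendsto (G := fun j => excess (dilate koebe (radius j)))
    (Eventually.of_forall fun x =>
      tendsto_excess_dilate koebe_mem radius_pos radius_lt_one tendsto_radius x)
    (fun j => (continuous_excess (hmem j)).aestronglyMeasurable) ?_
  have hbound : ∀ j, ∫⁻ x, ‖excess (dilate koebe (radius j)) x‖ₑ ≤
      ENNReal.ofReal (2 * π * (π ^ 2 / 6)) := by
    intro j
    obtain ⟨hi, hs⟩ := integral_excess_dilate koebe_mem hb (radius_pos j) (radius_lt_one j)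
    have hle := hasSum_le (fun n => mul_le_of_le_one_right (sq_nonneg _)
      (pow_le_one₀ (pow_nonneg (radius_pos j).le _)
        (pow_le_one₀ (radius_pos j).le (radius_lt_one j).le))) hs (hasSum_rotation 0)
    rw [inv_mul_le_iff₀ (by positivity)] at hle
    calc ∫⁻ x, ‖excess (dilate koebe (radius j)) x‖ₑ
        = ∫⁻ x, ENNReal.ofReal (excess (dilate koebe (radius j)) x) := by
          refine lintegral_congr fun x => ?_
          exact Real.enorm_of_nonneg (excess_nonneg (hmem j) x)
      _ = ENNReal.ofReal (∫ x, excess (dilate koebe (radius j)) x) :=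
          (ofReal_integral_eq_lintegral_ofReal hi
            (Eventually.of_forall (excess_nonneg (hmem j)))).symm
      _ ≤ _ := ENNReal.ofReal_le_ofReal hle
  refine ((liminf_le_of_frequently_le' (Frequently.of_forall hbound)).trans_lt
    ENNReal.ofReal_lt_top).ne

lemma integrable_excess {f : ℂ → ℂ} (hf : InClassS f) : Integrable (excess f) :=
  integrable_excess_koebe.mono' (continuous_excess hf).aestronglyMeasurable
    (Eventually.of_forall fun x => by
      rw [Real.norm_of_nonneg (excess_nonneg hf x)]
      exact excess_le hf x)

/-- The sum of the squared logarithmic coefficients, expressed through Green's function of the image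
domain. -/
lemma hasSum_excess {f g : ℂ → ℂ} {γ : ℕ → ℂ} (hf : InClassS f) (hb : IsBranch f g γ) :
    HasSum (fun n : ℕ => ‖γ (n + 1)‖ ^ 2) ((2 * π)⁻¹ * ∫ x, excess f x) := by
  have hmem := fun j => dilate_mem hf (radius_pos j) (radius_lt_one j)
  refine hasSum_of_tendsto_abel (fun n => sq_nonneg _)
    (fun j => (integral_excess_dilate hf hb (radius_pos j) (radius_lt_one j)).2) ?_
  refine Tendsto.const_mul _ ?_
  refine tendsto_integral_of_dominated_convergence (excess koebe)
    (fun j => (continuous_excess (hmem j)).aestronglyMeasurable) integrable_excess_koebe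
    (fun j => Eventually.of_forall fun x => ?_)
    (Eventually.of_forall fun x =>
      tendsto_excess_dilate hf radius_pos radius_lt_one tendsto_radius x)
  rw [Real.norm_of_nonneg (excess_nonneg (hmem j) x)]
  exact excess_le (hmem j) x

lemma integral_excess_koebe : (2 * π)⁻¹ * ∫ x, excess koebe x = π ^ 2 / 6 :=
  (hasSum_excess koebe_mem (isBranch_rotation koebe_eqOn)).unique (hasSum_rotation 0)

lemma isKoebeRotation_of_integral_eq {f : ℂ → ℂ} (hf : InClassS f)
    (h : ∫ x, excess f x = ∫ x, excess koebe x) : IsKoebeRotation f := by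
  have h1 : ∫ x, (excess koebe x - excess f x) = 0 := by
    rw [integral_sub integrable_excess_koebe (integrable_excess hf), h, sub_self]
  rw [integral_eq_zero_iff_of_nonneg (fun x => sub_nonneg.2 (excess_le hf x))
    (integrable_excess_koebe.sub (integrable_excess hf))] at h1
  have h2 : (fun x => excess koebe x - excess f x) = 0 :=
    (((continuous_excess koebe_mem).sub (continuous_excess hf)).ae_eq_iff_eq volume
      continuous_zero).1 h1
  have h3 : ∀ x, greenMean f x = greenMean koebe x := by
    intro x
    have := congrFun h2 x
    simp only [excess, Pi.zero_apply] at this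
    linarith
  obtain ⟨a, ha⟩ : ∃ a, a ∉ f '' ball (0 : ℂ) 1 := by
    by_contra! hcon
    have h4 := greenMean_eq_of_subset hf (x := 1) (fun z _ => hcon z)
    have h5 := greenMean_nonneg hf 1
    rw [h4] at h5
    linarith [Real.pi_pos]
  exact isKoebeRotation_of_greenMean_eq hf ha
    (by linarith [Real.add_one_le_exp ‖a‖] : ‖a‖ < Real.exp ‖a‖) (h3 _)

end DurenLeung


theorem duren_leung_inequality (f : ℂ → ℂ) (γ : ℕ → ℂ) (hf : InClassS f) (hγ : IsLogCoeffs f γ) :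
    (∑' n : ℕ, ‖γ (n + 1)‖ ^ 2 ≤ Real.pi ^ 2 / 6) ∧
    (∑' n : ℕ, ‖γ (n + 1)‖ ^ 2 = Real.pi ^ 2 / 6 ↔ IsKoebeRotation f) := by
  obtain ⟨g, hg, hg0, hexp, hcoeff⟩ := hγ
  have hb : DurenLeung.IsBranch f g γ :=
    ⟨hg, hg0, hexp, fun _ hz => DurenLeung.hasSum_logCoeffs hg hg0 hcoeff hz⟩
  have hpi : (0 : ℝ) < (2 * π)⁻¹ := by positivity
  rw [(DurenLeung.hasSum_excess hf hb).tsum_eq, ← DurenLeung.integral_excess_koebe]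
  refine ⟨?_, fun h => ?_, ?_⟩
  · exact mul_le_mul_of_nonneg_left (MeasureTheory.integral_mono (DurenLeung.integrable_excess hf)
      DurenLeung.integrable_excess_koebe (DurenLeung.excess_le hf)) hpi.le
  · exact DurenLeung.isKoebeRotation_of_integral_eq hf (mul_left_cancel₀ hpi.ne' h)
  · rintro ⟨θ, hθ⟩
    rw [DurenLeung.integral_excess_koebe]
    exact (DurenLeung.hasSum_excess hf (DurenLeung.isBranch_rotation hθ)).unique
      (DurenLeung.hasSum_rotation θ)
end

section
/- Let a, b ∈ ℝ satisfy a + b + 1 > 0, a + 3 ≥ 0 and (6 + a)b ≤ 6. Then the sequence p_n = n/(n² + a n + b), n = 1, 2, 3, …, is positive (in particular n² + a n + b > 0 for all n ≥ 1) and convex. -/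
/-!
Write `D x = x² + a x + b`. Positivity follows from `D n - D 1 = (n - 1) (n + 1 + a)`, where the
second factor is nonnegative for `n ≥ 2` because `a ≥ -3`. With `m = n + 1`, the second difference
equals `2 (m³ - m - b (3 m + a)) / (D (m - 1) * D m * D (m + 1))`, so convexity reduces to
`b (3 m + a) ≤ m³ - m` for `m ≥ 2` (`key_cubic`), which for `m = 2` is exactly `(6 + a) b ≤ 6`.
-/

/-- The sign of the numerator of the second difference centred at `m`. -/
lemma key_cubic (a b m : ℝ) (h2 : a + 3 ≥ 0) (h3 : (6 + a) * b ≤ 6) (hm : 2 ≤ m) :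
    0 ≤ m ^ 3 - m - b * (3 * m + a) := by
  have hc : 6 ≤ m ^ 3 - m := by nlinarith [mul_nonneg (sub_nonneg.2 hm) (sq_nonneg (m + 1))]
  rcases le_total b 0 with hb | hb
  · nlinarith [mul_nonneg (neg_nonneg.2 hb) (by linarith : 0 ≤ 3 * m + a)]
  · have h6 : 0 < 6 + a := by linarith
    -- The right side minus the left side is nondecreasing in `a`; at `a = -3` it is
    -- `3 (m - 1) (m (m + 1) - 6)`.
    have hk : 6 * (3 * m + a) ≤ (m ^ 3 - m) * (6 + a) := by
      have e1 : 0 ≤ (a + 3) * (m ^ 3 - m - 6) := mul_nonneg h2 (by linarith)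
      have e2 : 0 ≤ (m - 1) * ((m - 2) * (m + 3)) :=
        mul_nonneg (by linarith) (mul_nonneg (by linarith) (by linarith))
      nlinarith
    have hq : ((6 + a) * b) * (3 * m + a) ≤ 6 * (3 * m + a) :=
      mul_le_mul_of_nonneg_right h3 (by linarith)
    have : 0 ≤ (6 + a) * (m ^ 3 - m - b * (3 * m + a)) := by nlinarith
    exact nonneg_of_mul_nonneg_right this h6

theorem convex_sequence_quadratic_over_n
    (a b : ℝ) (h1 : a + b + 1 > 0) (h2 : a + 3 ≥ 0) (h3 : (6 + a) * b ≤ 6)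
    (p : ℕ → ℝ) (hp : ∀ n : ℕ, 1 ≤ n → p n = (n : ℝ) / ((n : ℝ) ^ 2 + a * n + b)) :
    (∀ n : ℕ, 1 ≤ n → 0 < (n : ℝ) ^ 2 + a * (n : ℝ) + b) ∧
    (∀ n : ℕ, 1 ≤ n → 0 < p n) ∧
    (∀ n : ℕ, 1 ≤ n → 0 ≤ p n - 2 * p (n + 1) + p (n + 2)) := by
  have hD : ∀ n : ℕ, 1 ≤ n → 0 < (n : ℝ) ^ 2 + a * (n : ℝ) + b := by
    intro n hn
    rcases hn.eq_or_lt with rfl | hn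
    · norm_num; linarith
    · have hn' : (2 : ℝ) ≤ n := by exact_mod_cast hn
      nlinarith [mul_nonneg (by linarith : (0 : ℝ) ≤ n - 1) (by linarith : 0 ≤ n + 1 + a)]
  refine ⟨hD, fun n hn => ?_, fun n hn => ?_⟩
  · rw [hp n hn]
    exact div_pos (by exact_mod_cast hn) (hD n hn)
  · have d0 := hD n hn
    have d1 := hD (n + 1) (by omega)
    have d2 := hD (n + 2) (by omega)
    rw [hp n hn, hp (n + 1) (by omega), hp (n + 2) (by omega)]
    have hn' : (1 : ℝ) ≤ n := by exact_mod_cast hn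
    push_cast at d1 d2 ⊢
    generalize (n : ℝ) = x at *
    have hk := key_cubic a b (x + 1) h2 h3 (by linarith)
    have e : x / (x ^ 2 + a * x + b) - 2 * ((x + 1) / ((x + 1) ^ 2 + a * (x + 1) + b))
        + (x + 2) / ((x + 2) ^ 2 + a * (x + 2) + b)
        = 2 * ((x + 1) ^ 3 - (x + 1) - b * (3 * (x + 1) + a)) /
          ((x ^ 2 + a * x + b) * ((x + 1) ^ 2 + a * (x + 1) + b)
            * ((x + 2) ^ 2 + a * (x + 2) + b)) := by
      have n0 := d0.ne'
      have n1 := d1.ne'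
      have n2 := d2.ne'
      rw [mul_div_assoc', div_sub_div _ _ n0 n1, div_add_div _ _ (mul_ne_zero n0 n1) n2]
      congr 1
      ring
    rw [e]
    exact div_nonneg (by linarith) (mul_pos (mul_pos d0 d1) d2).le
end

section
/- Let a, b ∈ ℝ satisfy a + b + 1 > 0, a + 2 ≥ 0 and b ≤ a² + 6a + 11. Then the sequence p_n = 1/(n² + a n + b), n = 1, 2, 3, …, is positive (in particular n² + a n + b > 0 for all n ≥ 1) and convex. -/
/-!
Write `q x = x² + a x + b`. Positivity follows from `q n = (a + b + 1) + (n - 1)(n + 1 + a)`.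
For convexity, put `m = n + 1` and `d = 2m + a`, so that `q (m ± 1) = q m ± d + 1`. Over the
common denominator, the second difference of `1 / q` has numerator `2 (d² - q m - 1)`, and
`d² - q m - 1 = (a² + 6a + 11 - b) + 3 (n - 1)(n + 3 + a)` is nonnegative.
-/

theorem convex_sequence_one_over_quadratic
    (a b : ℝ) (h1 : a + b + 1 > 0) (h2 : a + 2 ≥ 0) (h3 : b ≤ a ^ 2 + 6 * a + 11)
    (p : ℕ → ℝ) (hp : ∀ n : ℕ, 1 ≤ n → p n = 1 / ((n : ℝ) ^ 2 + a * n + b)) :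
    (∀ n : ℕ, 1 ≤ n → 0 < (n : ℝ) ^ 2 + a * (n : ℝ) + b) ∧
    (∀ n : ℕ, 1 ≤ n → 0 < p n) ∧
    (∀ n : ℕ, 1 ≤ n → 0 ≤ p n - 2 * p (n + 1) + p (n + 2)) := by
  have pos : ∀ n : ℕ, 1 ≤ n → 0 < (n : ℝ) ^ 2 + a * (n : ℝ) + b := by
    intro n hn
    have hn' : (1 : ℝ) ≤ n := by exact_mod_cast hn
    have h : 0 ≤ ((n : ℝ) - 1) * (n + 1 + a) := mul_nonneg (by linarith) (by linarith)
    linarith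
  refine ⟨pos, fun n hn => ?_, fun n hn => ?_⟩
  · rw [hp n hn]
    exact one_div_pos.mpr (pos n hn)
  · have hn' : (1 : ℝ) ≤ n := by exact_mod_cast hn
    have q0 := pos n hn
    have q1 := pos (n + 1) (by omega)
    have q2 := pos (n + 2) (by omega)
    rw [hp n hn, hp (n + 1) (by omega), hp (n + 2) (by omega)]
    push_cast at q1 q2 ⊢
    have h : 0 ≤ ((n : ℝ) - 1) * (n + 3 + a) := mul_nonneg (by linarith) (by linarith)
    have second_diff : ∀ x y z : ℝ, 0 < x → 0 < y → 0 < z → 0 ≤ y * z - 2 * (x * z) + x * y →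
        0 ≤ 1 / x - 2 * (1 / y) + 1 / z := by
      intro x y z hx hy hz hnum
      have e : 1 / x - 2 * (1 / y) + 1 / z = (y * z - 2 * (x * z) + x * y) / (x * y * z) := by
        field_simp
      rw [e]
      positivity
    refine second_diff _ _ _ q0 q1 q2 ?_
    have num : 0 ≤ 2 * ((a ^ 2 + 6 * a + 11 - b) + 3 * (((n : ℝ) - 1) * (n + 3 + a))) := by
      linarith
    linarith
end

section
/- Let α, β ∈ ℝ satisfy α > −1, β > −1 and |α|(1 + 3|β| + β²) ≤ 1/2. Then the sequence p_n = n²/((n+α)²(n+β)), n = 1, 2, 3, …, is positive and convex. -/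
/-!
The sequence is the restriction to the integers of `f x = x² / ((x + α)² (x + β))`, and `f` is
convex on `[1, ∞)`. Indeed `f'' x = 2 Q(x) / ((x + α)⁴ (x + β)³)` with
`Q(x) = x⁴ - 2αx³ - 6αβx² - 2αβ²x + α²β²`, and for `x ≥ 1`
`Q(x) ≥ x⁴ - 2|α|(1 + 3|β| + β²)x³ ≥ x⁴ - x³ ≥ 0`.
-/

/-- Nonnegativity of the quartic in the numerator of the second derivative. -/
lemma quartic_nonneg (α β : ℝ) (h : |α| * (1 + 3 * |β| + β ^ 2) ≤ 1 / 2) (x : ℝ) (hx : 1 ≤ x) :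
    0 ≤ x ^ 4 - 2 * α * x ^ 3 - 6 * α * β * x ^ 2 - 2 * α * β ^ 2 * x + α ^ 2 * β ^ 2 := by
  have hx0 : 0 ≤ x := by linarith
  have hx2 : x ^ 2 ≤ x ^ 3 := pow_le_pow_right₀ hx (by norm_num)
  have hx1 : x ≤ x ^ 3 := le_self_pow₀ hx (by norm_num)
  have hx3 : x ^ 3 ≤ x ^ 4 := pow_le_pow_right₀ hx (by norm_num)
  have h1 : α * x ^ 3 ≤ |α| * x ^ 3 := mul_le_mul_of_nonneg_right (le_abs_self _) (by positivity)
  have h2 : α * β * x ^ 2 ≤ |α| * |β| * x ^ 3 := by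
    have := le_abs_self (α * β)
    rw [abs_mul] at this
    exact mul_le_mul this hx2 (by positivity) (by positivity)
  have h3 : α * β ^ 2 * x ≤ |α| * β ^ 2 * x ^ 3 :=
    mul_le_mul (mul_le_mul_of_nonneg_right (le_abs_self _) (by positivity)) hx1 hx0
      (by positivity)
  have h4 := mul_le_mul_of_nonneg_right h (pow_nonneg hx0 3)
  have h5 : 0 ≤ α ^ 2 * β ^ 2 := by positivity
  nlinarith

lemma convexOn_sq_div_cubic (α β : ℝ) (hα : α > -1) (hβ : β > -1)
    (h : |α| * (1 + 3 * |β| + β ^ 2) ≤ 1 / 2) :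
    ConvexOn ℝ (Set.Ici 1) (fun x : ℝ => x ^ 2 / ((x + α) ^ 2 * (x + β))) := by
  have key1 : ∀ x : ℝ, 1 ≤ x → HasDerivAt (fun x : ℝ => x ^ 2 / ((x + α) ^ 2 * (x + β)))
      ((2 * α * x * (x + β) - x ^ 2 * (x + α)) / ((x + α) ^ 3 * (x + β) ^ 2)) x := by
    intro x hx
    have ha : x + α ≠ 0 := by linarith
    have hb : x + β ≠ 0 := by linarith
    have ia := (hasDerivAt_id' x).add_const α
    have ib := (hasDerivAt_id' x).add_const β
    refine (((hasDerivAt_id' x).fun_pow 2).fun_div ((ia.fun_pow 2).fun_mul ib)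
      (mul_ne_zero (pow_ne_zero 2 ha) hb)).congr_deriv ?_
    field_simp
    ring
  have key2 : ∀ x : ℝ, 1 ≤ x → HasDerivAt
      (fun x : ℝ => (2 * α * x * (x + β) - x ^ 2 * (x + α)) / ((x + α) ^ 3 * (x + β) ^ 2))
      (2 * (x ^ 4 - 2 * α * x ^ 3 - 6 * α * β * x ^ 2 - 2 * α * β ^ 2 * x + α ^ 2 * β ^ 2)
        / ((x + α) ^ 4 * (x + β) ^ 3)) x := by
    intro x hx
    have ha : x + α ≠ 0 := by linarith
    have hb : x + β ≠ 0 := by linarith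
    have ia := (hasDerivAt_id' x).add_const α
    have ib := (hasDerivAt_id' x).add_const β
    refine (((((hasDerivAt_id' x).const_mul (2 * α)).fun_mul ib).fun_sub
      (((hasDerivAt_id' x).fun_pow 2).fun_mul ia)).fun_div ((ia.fun_pow 3).fun_mul (ib.fun_pow 2))
      (mul_ne_zero (pow_ne_zero 3 ha) (pow_ne_zero 2 hb))).congr_deriv ?_
    field_simp
    ring
  refine convexOn_of_hasDerivWithinAt2_nonneg (convex_Ici 1)
    (fun x hx => (key1 x hx).continuousAt.continuousWithinAt)
    (fun x hx => (key1 x (interior_subset hx)).hasDerivWithinAt)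
    (fun x hx => (key2 x (interior_subset hx)).hasDerivWithinAt) ?_
  intro x hx
  have hx1 : 1 ≤ x := interior_subset hx
  have ha : 0 < x + α := by linarith
  have hb : 0 < x + β := by linarith
  have := quartic_nonneg α β h x hx1
  positivity

theorem convex_sequence_nsq_over_cubic
    (α β : ℝ) (hα : α > -1) (hβ : β > -1) (h : |α| * (1 + 3 * |β| + β ^ 2) ≤ 1 / 2)
    (p : ℕ → ℝ) (hp : ∀ n : ℕ, 1 ≤ n → p n = (n : ℝ) ^ 2 / (((n : ℝ) + α) ^ 2 * ((n : ℝ) + β))) :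
    (∀ n : ℕ, 1 ≤ n → 0 < ((n : ℝ) + α) ^ 2 * ((n : ℝ) + β)) ∧
    (∀ n : ℕ, 1 ≤ n → 0 < p n) ∧
    (∀ n : ℕ, 1 ≤ n → 0 ≤ p n - 2 * p (n + 1) + p (n + 2)) := by
  have hpos : ∀ n : ℕ, 1 ≤ n → 0 < ((n : ℝ) + α) ^ 2 * ((n : ℝ) + β) := by
    intro n hn
    have hn' : (1 : ℝ) ≤ n := by exact_mod_cast hn
    have ha : 0 < (n : ℝ) + α := by linarith
    have hb : 0 < (n : ℝ) + β := by linarith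
    positivity
  refine ⟨hpos, ?_, ?_⟩
  · intro n hn
    rw [hp n hn]
    have hn' : (0 : ℝ) < n := by exact_mod_cast hn
    exact div_pos (by positivity) (hpos n hn)
  · intro n hn
    have hn' : (1 : ℝ) ≤ n := by exact_mod_cast hn
    have hm : (1 / 2 : ℝ) * n + 1 / 2 * ((n + 2 : ℕ) : ℝ) = ((n + 1 : ℕ) : ℝ) := by
      push_cast
      ring
    have hn2 : (1 : ℝ) ≤ ((n + 2 : ℕ) : ℝ) := by
      push_cast
      linarith
    -- Midpoint convexity of `f` at `n` and `n + 2`.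
    have hc := (convexOn_sq_div_cubic α β hα hβ h).2 (Set.mem_Ici.2 hn') (Set.mem_Ici.2 hn2)
      (by norm_num : (0 : ℝ) ≤ 1 / 2) (by norm_num : (0 : ℝ) ≤ 1 / 2) (by norm_num)
    simp only [smul_eq_mul] at hc
    rw [hm, ← hp n hn, ← hp (n + 1) (by omega), ← hp (n + 2) (by omega)] at hc
    linarith
end
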